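/- arXiv:0803.1536 — 4 statements merged into one kernel-verified Lean document; each statement's English description precedes it below -/
import Mathlib

section
/- Let K be a field, m ≥ 2, N ≥ 1, and let Λ_N = KQ/I_N where Q is the quiver with vertices 0,…,m-1 and arrows a_i : i → i+1, ā_i : i+1 → i (indices mod m), and I_N is generated by a_i a_{i+1}, ā_{i-1} ā_{i-2}, and (a_i ā_i)^N − (ā_{i-1} a_{i-1})^N for all i. Then the centre Z(Λ_N) has K-dimension Nm + 1, with K-basis {1} ∪ {(a_i ā_i)^N : 0 ≤ i ≤ m-1} ∪ {(a_i ā_i)^s + (ā_i a_i)^s : 0 ≤ i ≤ m-1, 1 ≤ s ≤ N-1}. -/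
/-- Generators of the path algebra of the cyclic double quiver:
trivial paths `e i`, arrows `a i : i → i+1` and `abar i : i+1 → i`. -/
inductive Gen (m : ℕ) : Type
  | e (i : ZMod m)
  | a (i : ZMod m)
  | abar (i : ZMod m)

variable (K : Type) [Field K] (m N : ℕ) [NeZero m]

/-- The trivial path `e i` in the free algebra. -/
def Efree (i : ZMod m) : FreeAlgebra K (Gen m) := FreeAlgebra.ι K (Gen.e i)
/-- The arrow `a_i : i → i+1` in the free algebra. -/
def Afree (i : ZMod m) : FreeAlgebra K (Gen m) := FreeAlgebra.ι K (Gen.a i)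
/-- The arrow `ā_i : i+1 → i` in the free algebra. -/
def ABfree (i : ZMod m) : FreeAlgebra K (Gen m) := FreeAlgebra.ι K (Gen.abar i)

/-- The defining relations of `Λ_N = KQ/I_N`: the path algebra relations for the
quiver `Q` together with the relations generating `I_N`. -/
inductive LamRel : FreeAlgebra K (Gen m) → FreeAlgebra K (Gen m) → Prop
  | idem (i : ZMod m) : LamRel (Efree K m i * Efree K m i) (Efree K m i)
  | orth (i j : ZMod m) (h : i ≠ j) : LamRel (Efree K m i * Efree K m j) 0
  | sum_e : LamRel (∑ i : ZMod m, Efree K m i) 1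
  | src_a (i : ZMod m) : LamRel (Efree K m i * Afree K m i) (Afree K m i)
  | tgt_a (i : ZMod m) : LamRel (Afree K m i * Efree K m (i + 1)) (Afree K m i)
  | src_ab (i : ZMod m) : LamRel (Efree K m (i + 1) * ABfree K m i) (ABfree K m i)
  | tgt_ab (i : ZMod m) : LamRel (ABfree K m i * Efree K m i) (ABfree K m i)
  | zero_aa (i : ZMod m) : LamRel (Afree K m i * Afree K m (i + 1)) 0
  | zero_abab (i : ZMod m) : LamRel (ABfree K m i * ABfree K m (i - 1)) 0
  | comm (i : ZMod m) :
      LamRel ((Afree K m i * ABfree K m i) ^ N) ((ABfree K m (i - 1) * Afree K m (i - 1)) ^ N)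

/-- The special biserial algebra `Λ_N = KQ/I_N`. -/
abbrev Lam : Type := RingQuot (LamRel K m N)

/-- The trivial path `e_i` in `Λ_N`. -/
def e (i : ZMod m) : Lam K m N := RingQuot.mkAlgHom K (LamRel K m N) (Efree K m i)
/-- The arrow `a_i` in `Λ_N`. -/
def a (i : ZMod m) : Lam K m N := RingQuot.mkAlgHom K (LamRel K m N) (Afree K m i)
/-- The arrow `ā_i` in `Λ_N`. -/
def ab (i : ZMod m) : Lam K m N := RingQuot.mkAlgHom K (LamRel K m N) (ABfree K m i)

/-- The claimed basis of the centre of `Λ_N`: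
`1`, the elements `(a_i ā_i)^N`, and the elements `(a_i ā_i)^s + (ā_i a_i)^s`
for `0 ≤ i ≤ m-1` and `1 ≤ s ≤ N-1`. -/
def centreBasisFam : Unit ⊕ ZMod m ⊕ (ZMod m × Fin (N - 1)) → Lam K m N
  | Sum.inl _ => 1
  | Sum.inr (Sum.inl i) => (a K m N i * ab K m N i) ^ N
  | Sum.inr (Sum.inr (i, s)) =>
      (a K m N i * ab K m N i) ^ ((s : ℕ) + 1) + (ab K m N i * a K m N i) ^ ((s : ℕ) + 1)

section Rels
variable {K m N}

theorem e_idem (i : ZMod m) : e K m N i * e K m N i = e K m N i := by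
  unfold e; rw [← map_mul]; exact RingQuot.mkAlgHom_rel K (LamRel.idem i)

theorem e_orth {i j : ZMod m} (h : i ≠ j) : e K m N i * e K m N j = 0 := by
  unfold e; rw [← map_mul, RingQuot.mkAlgHom_rel K (LamRel.orth i j h), map_zero]

theorem e_sum : ∑ i, e K m N i = 1 := by
  unfold e; rw [← map_sum, RingQuot.mkAlgHom_rel K (LamRel.sum_e), map_one]

theorem ea (i : ZMod m) : e K m N i * a K m N i = a K m N i := by
  unfold e a; rw [← map_mul]; exact RingQuot.mkAlgHom_rel K (LamRel.src_a i)

theorem ae (i : ZMod m) : a K m N i * e K m N (i+1) = a K m N i := by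
  unfold e a; rw [← map_mul]; exact RingQuot.mkAlgHom_rel K (LamRel.tgt_a i)

theorem eb (i : ZMod m) : e K m N (i+1) * ab K m N i = ab K m N i := by
  unfold e ab; rw [← map_mul]; exact RingQuot.mkAlgHom_rel K (LamRel.src_ab i)

theorem be (i : ZMod m) : ab K m N i * e K m N i = ab K m N i := by
  unfold e ab; rw [← map_mul]; exact RingQuot.mkAlgHom_rel K (LamRel.tgt_ab i)

theorem aa0 (i : ZMod m) : a K m N i * a K m N (i+1) = 0 := by
  unfold a; rw [← map_mul, RingQuot.mkAlgHom_rel K (LamRel.zero_aa i), map_zero]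

theorem bb0 (i : ZMod m) : ab K m N i * ab K m N (i-1) = 0 := by
  unfold ab; rw [← map_mul, RingQuot.mkAlgHom_rel K (LamRel.zero_abab i), map_zero]

theorem xy (i : ZMod m) : (a K m N i * ab K m N i) ^ N
    = (ab K m N (i-1) * a K m N (i-1)) ^ N := by
  unfold a ab; rw [← map_mul, ← map_mul, ← map_pow, ← map_pow]
  exact RingQuot.mkAlgHom_rel K (LamRel.comm i)

theorem lam_ind {P : Lam K m N → Prop} (hc : ∀ c : K, P (algebraMap K _ c))
    (he : ∀ i, P (e K m N i)) (ha : ∀ i, P (a K m N i)) (hb : ∀ i, P (ab K m N i))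
    (hadd : ∀ x y, P x → P y → P (x + y)) (hmul : ∀ x y, P x → P y → P (x * y)) (z) : P z := by
  obtain ⟨w, rfl⟩ := RingQuot.mkAlgHom_surjective K (LamRel K m N) z
  induction w using FreeAlgebra.induction with
  | grade0 c => rw [AlgHom.commutes]; exact hc c
  | grade1 g =>
    cases g with
    | e i => exact he i
    | a i => exact ha i
    | abar i => exact hb i
  | mul x y hx hy => rw [map_mul]; exact hmul _ _ hx hy
  | add x y hx hy => rw [map_add]; exact hadd _ _ hx hy

theorem ea' (j i : ZMod m) : e K m N j * a K m N i = if j = i then a K m N i else 0 := by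
  split_ifs with h
  · rw [h, ea]
  · rw [← ea, ← mul_assoc, e_orth h, zero_mul]

theorem ae' (i j : ZMod m) : a K m N i * e K m N j = if j = i + 1 then a K m N i else 0 := by
  split_ifs with h
  · rw [h, ae]
  · rw [← ae, mul_assoc, e_orth (Ne.symm h), mul_zero]

theorem eb' (j i : ZMod m) : e K m N j * ab K m N i = if j = i + 1 then ab K m N i else 0 := by
  split_ifs with h
  · rw [h, eb]
  · rw [← eb, ← mul_assoc, e_orth h, zero_mul]

theorem be' (i j : ZMod m) : ab K m N i * e K m N j = if j = i then ab K m N i else 0 := by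
  split_ifs with h
  · rw [h, be]
  · rw [← be, mul_assoc, e_orth (Ne.symm h), mul_zero]

theorem aa (i j : ZMod m) : a K m N i * a K m N j = 0 := by
  by_cases h : j = i + 1
  · rw [h, aa0]
  · rw [← ea j, ← mul_assoc, ae', if_neg h, zero_mul]

theorem bb (i j : ZMod m) : ab K m N i * ab K m N j = 0 := by
  by_cases h : j + 1 = i
  · rw [← h]; have := bb0 (K := K) (N := N) (j+1); rwa [add_sub_cancel_right] at this
  · rw [← eb j, ← mul_assoc, be', if_neg h, zero_mul]

theorem abne {i j : ZMod m} (h : i ≠ j) : a K m N i * ab K m N j = 0 := by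
  rw [← eb j, ← mul_assoc, ae', if_neg (by simpa using h.symm), zero_mul]

theorem bane {i j : ZMod m} (h : i ≠ j) : ab K m N i * a K m N j = 0 := by
  rw [← ea j, ← mul_assoc, be', if_neg h.symm, zero_mul]

/-- cycles -/
def xx (i : ZMod m) : Lam K m N := a K m N i * ab K m N i
/-- cycles -/
def yy (i : ZMod m) : Lam K m N := ab K m N i * a K m N i

theorem xa (i : ZMod m) (s : ℕ) : xx i ^ s * a K m N i = a K m N i * yy i ^ s := by
  induction s with
  | zero => simp
  | succ s ih => rw [pow_succ', mul_assoc, ih, pow_succ' (yy i)]; simp only [xx, yy, mul_assoc]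

theorem yb (i : ZMod m) (s : ℕ) : yy i ^ s * ab K m N i = ab K m N i * xx i ^ s := by
  induction s with
  | zero => simp
  | succ s ih => rw [pow_succ', mul_assoc, ih, pow_succ' (xx i)]; simp only [xx, yy, mul_assoc]

theorem xs (i : ZMod m) (s : ℕ) : (xx i : Lam K m N) ^ (s+1) = a K m N i * (yy i ^ s * ab K m N i) := by
  rw [pow_succ, xx, ← mul_assoc, ← mul_assoc]; congr 1; exact xa i s

theorem ys (i : ZMod m) (s : ℕ) : (yy i : Lam K m N) ^ (s+1) = ab K m N i * (xx i ^ s * a K m N i) := by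
  rw [pow_succ, yy, ← mul_assoc, ← mul_assoc]; congr 1; exact yb i s

theorem xs' (i : ZMod m) (s : ℕ) : (xx i : Lam K m N) ^ (s+1) = xx i ^ s * a K m N i * ab K m N i := by
  rw [pow_succ, xx, ← mul_assoc]

theorem ys' (i : ZMod m) (s : ℕ) : (yy i : Lam K m N) ^ (s+1) = yy i ^ s * ab K m N i * a K m N i := by
  rw [pow_succ, yy, ← mul_assoc]

theorem ex (j i : ZMod m) (s : ℕ) : e K m N j * xx i ^ (s+1) = if j = i then xx i ^ (s+1) else 0 := by
  rw [xs, ← mul_assoc, ea']; split_ifs <;> simp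
theorem ey (j i : ZMod m) (s : ℕ) : e K m N j * yy i ^ (s+1) = if j = i+1 then yy i ^ (s+1) else 0 := by
  rw [ys, ← mul_assoc, eb']; split_ifs <;> simp
theorem xe (j i : ZMod m) (s : ℕ) : xx i ^ (s+1) * e K m N j = if j = i then xx i ^ (s+1) else 0 := by
  rw [xs', mul_assoc, be']; split_ifs <;> simp
theorem ye (j i : ZMod m) (s : ℕ) : yy i ^ (s+1) * e K m N j = if j = i+1 then yy i ^ (s+1) else 0 := by
  rw [ys', mul_assoc, ae']; split_ifs <;> simp

theorem ax (j i : ZMod m) (s : ℕ) : a K m N j * xx i ^ (s+1) = 0 := by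
  rw [xs, ← mul_assoc, aa, zero_mul]
theorem yal (j i : ZMod m) (s : ℕ) : yy i ^ (s+1) * a K m N j = 0 := by
  rw [ys', mul_assoc, aa, mul_zero]
theorem by0 (j i : ZMod m) (s : ℕ) : ab K m N j * yy i ^ (s+1) = 0 := by
  rw [ys, ← mul_assoc, bb, zero_mul]
theorem xb (j i : ZMod m) (s : ℕ) : xx i ^ (s+1) * ab K m N j = 0 := by
  rw [xs', mul_assoc, bb, mul_zero]

theorem ay (j i : ZMod m) (s : ℕ) : a K m N j * yy i ^ (s+1) = if j = i then xx i ^ (s+1) * a K m N i else 0 := by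
  split_ifs with h
  · rw [h, xa]
  · rw [ys, ← mul_assoc, abne h, zero_mul]
theorem xa' (j i : ZMod m) (s : ℕ) : xx i ^ (s+1) * a K m N j = if j = i then xx i ^ (s+1) * a K m N i else 0 := by
  split_ifs with h
  · rw [h]
  · rw [xs', mul_assoc, bane (Ne.symm h), mul_zero]
theorem bx (j i : ZMod m) (s : ℕ) : ab K m N j * xx i ^ (s+1) = if j = i then yy i ^ (s+1) * ab K m N i else 0 := by
  split_ifs with h
  · rw [h, yb]
  · rw [xs, ← mul_assoc, bane h, zero_mul]
theorem yb' (j i : ZMod m) (s : ℕ) : yy i ^ (s+1) * ab K m N j = if j = i then yy i ^ (s+1) * ab K m N i else 0 := by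
  split_ifs with h
  · rw [h]
  · rw [ys', mul_assoc, abne (Ne.symm h), mul_zero]

theorem xyN (i : ZMod m) : (xx i : Lam K m N) ^ N = yy (i-1) ^ N := xy i

theorem xNa (hN : 1 ≤ N) (i j : ZMod m) : (xx i : Lam K m N) ^ N * a K m N j = 0 := by
  rw [xyN]; obtain ⟨M, hM⟩ : ∃ M, N = M + 1 := ⟨N - 1, by omega⟩
  have := yal (K := K) (N := N) j (i-1) M
  rwa [← hM] at this
theorem bxN (hN : 1 ≤ N) (i j : ZMod m) : ab K m N j * xx i ^ N = 0 := by
  rw [xyN]; obtain ⟨M, hM⟩ : ∃ M, N = M + 1 := ⟨N - 1, by omega⟩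
  have := by0 (K := K) (N := N) j (i-1) M
  rwa [← hM] at this
theorem xbig (hN : 1 ≤ N) (i : ZMod m) {s : ℕ} (h : N < s) : (xx i : Lam K m N) ^ s = 0 := by
  obtain ⟨k, rfl⟩ : ∃ k, s = N + (k + 1) := ⟨s - N - 1, by omega⟩
  rw [pow_add, xs, ← mul_assoc, xNa hN, zero_mul]
theorem ybig (hN : 1 ≤ N) (i : ZMod m) {s : ℕ} (h : N < s) : (yy i : Lam K m N) ^ s = 0 := by
  obtain ⟨k, rfl⟩ : ∃ k, s = k + 1 := ⟨s - 1, by omega⟩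
  obtain ⟨l, rfl⟩ : ∃ l, k = l + N := ⟨k - N, by omega⟩
  rw [ys, pow_add, mul_assoc, xNa hN, mul_zero, mul_zero]

/-- spanning family -/
inductive SpanSet : Lam K m N → Prop
  | ex (i : ZMod m) (s : ℕ) : SpanSet (e K m N i * xx i ^ s)
  | y (i : ZMod m) (s : ℕ) : SpanSet (yy i ^ (s+1))
  | xa (i : ZMod m) (s : ℕ) : SpanSet (xx i ^ s * a K m N i)
  | yb (i : ZMod m) (s : ℕ) : SpanSet (yy i ^ s * ab K m N i)

theorem SpanSet.e (i : ZMod m) : SpanSet (e K m N i) := by simpa using SpanSet.ex (K := K) (N := N) i 0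
theorem SpanSet.x (i : ZMod m) (s : ℕ) : SpanSet (xx i ^ (s+1) : Lam K m N) := by
  simpa [_root_.ex] using SpanSet.ex (K := K) (N := N) i (s+1)

theorem e_cases (i : ZMod m) (s : ℕ) : e K m N i * xx i ^ s = e K m N i ∨ 
   ∃ t, e K m N i * xx i ^ s = xx i ^ (t + 1) := by
  cases s with
  | zero => left; simp
  | succ s => right; exact ⟨s, by simp [ex]⟩

theorem exa (j i : ZMod m) (s : ℕ) : e K m N j * (xx i ^ s * a K m N i) = if j = i then xx i ^ s * a K m N i else 0 := by
  rw [xa, ← mul_assoc, ea']; split_ifs <;> simp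
theorem eyb (j i : ZMod m) (s : ℕ) : e K m N j * (yy i ^ s * ab K m N i) = if j = i+1 then yy i ^ s * ab K m N i else 0 := by
  rw [yb, ← mul_assoc, eb']; split_ifs <;> simp

theorem span_top : Submodule.span K {z : Lam K m N | SpanSet z} = ⊤ := by
  set S := Submodule.span K {z : Lam K m N | SpanSet z} with hS
  have sub : ∀ z, SpanSet z → z ∈ S := fun z hz => Submodule.subset_span hz
  have key : ∀ g : Lam K m N, (∀ z, SpanSet z → g * z ∈ S) → ∀ z ∈ S, g * z ∈ S := by
    intro g hg z hz
    induction hz using Submodule.span_induction with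
    | mem x h => exact hg x h
    | zero => simp
    | add x y _ _ hx hy => rw [mul_add]; exact S.add_mem hx hy
    | smul c x _ hx => rw [mul_smul_comm]; exact S.smul_mem c hx
  have all : ∀ w : Lam K m N, ∀ z ∈ S, w * z ∈ S := by
    intro w
    induction w using lam_ind with
    | hc c => intro z hz; rw [← Algebra.smul_def]; exact S.smul_mem c hz
    | he j =>
      apply key; rintro z (⟨i, s⟩ | ⟨i, s⟩ | ⟨i, s⟩ | ⟨i, s⟩)
      · by_cases h : j = i
        · rw [h, ← mul_assoc, e_idem]; exact sub _ (.ex i s)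
        · rw [← mul_assoc, e_orth h]; simp
      · rw [ey]; split_ifs; exacts [sub _ (.y i s), S.zero_mem]
      · rw [exa]; split_ifs; exacts [sub _ (.xa i s), S.zero_mem]
      · rw [eyb]; split_ifs; exacts [sub _ (.yb i s), S.zero_mem]
    | ha j =>
      apply key; rintro z (⟨i, s⟩ | ⟨i, s⟩ | ⟨i, s⟩ | ⟨i, s⟩)
      · rcases e_cases (K := K) (N := N) i s with h | ⟨t, h⟩ <;> rw [h]
        · rw [ae']; split_ifs
          · simpa using sub _ (.xa j 0)
          · exact S.zero_mem
        · rw [ax]; exact S.zero_mem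
      · rw [ay]; split_ifs; exacts [sub _ (.xa i _), S.zero_mem]
      · rw [xa, ← mul_assoc, aa]; simp
      · by_cases h : j = i
        · rw [h, ← xs]; exact sub _ (.x i s)
        · rw [yb, ← mul_assoc, abne h]; simp
    | hb j =>
      apply key; rintro z (⟨i, s⟩ | ⟨i, s⟩ | ⟨i, s⟩ | ⟨i, s⟩)
      · rcases e_cases (K := K) (N := N) i s with h | ⟨t, h⟩ <;> rw [h]
        · rw [be']; split_ifs
          · simpa using sub _ (.yb j 0)
          · exact S.zero_mem
        · rw [bx]; split_ifs; exacts [sub _ (.yb i _), S.zero_mem]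
      · rw [by0]; exact S.zero_mem
      · by_cases h : j = i
        · rw [h, ← ys]; exact sub _ (.y i s)
        · rw [xa, ← mul_assoc, bane h]; simp
      · rw [yb, ← mul_assoc, bb]; simp
    | hadd x y hx hy => intro z hz; rw [add_mul]; exact S.add_mem (hx z hz) (hy z hz)
    | hmul x y hx hy => intro z hz; rw [mul_assoc]; exact hx _ (hy z hz)
  have h1 : (1 : Lam K m N) ∈ S := by
    rw [← e_sum]; exact Submodule.sum_mem _ fun i _ => sub _ (.e i)
  rw [eq_top_iff]; intro z _
  simpa using all z 1 h1

theorem mem_center {z : Lam K m N} (he : ∀ i, e K m N i * z = z * e K m N i)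
    (ha : ∀ i, a K m N i * z = z * a K m N i) (hb : ∀ i, ab K m N i * z = z * ab K m N i) :
    z ∈ Subalgebra.center K (Lam K m N) := by
  rw [Subalgebra.mem_center_iff]
  intro w
  induction w using lam_ind with
  | hc c => exact Algebra.commutes c z
  | he i => exact he i
  | ha i => exact ha i
  | hb i => exact hb i
  | hadd x y hx hy => rw [add_mul, mul_add, hx, hy]
  | hmul x y hx hy => rw [mul_assoc, hy, ← mul_assoc, hx, mul_assoc]

theorem fam_center (hN : 1 ≤ N) (k) : centreBasisFam K m N k ∈ Subalgebra.center K (Lam K m N) := by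
  rcases k with _ | i | ⟨i, s⟩
  · exact Subalgebra.one_mem _
  · change xx i ^ N ∈ _
    obtain ⟨M, hM⟩ : ∃ M, N = M + 1 := ⟨N - 1, by omega⟩
    apply mem_center
    · intro j
      have h1 := ex (K := K) (N := N) j i M
      have h2 := xe (K := K) (N := N) j i M
      rw [← hM] at h1 h2; rw [h1, h2]
    · intro j
      have h1 := ax (K := K) (N := N) j i M
      rw [← hM] at h1; rw [h1, xNa hN]
    · intro j
      have h1 := xb (K := K) (N := N) j i M
      rw [← hM] at h1; rw [h1, bxN hN]
  · change xx i ^ ((s:ℕ)+1) + yy i ^ ((s:ℕ)+1) ∈ _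
    apply mem_center
    · intro j; rw [mul_add, add_mul, ex, ey, xe, ye]
    · intro j; rw [mul_add, add_mul, xa', yal, ax, ay, zero_add, add_zero]
    · intro j; rw [mul_add, add_mul, yb', xb, bx, by0, zero_add, add_zero]

theorem lin_indep (hN : 1 ≤ N) (i : ZMod m) (hx : (xx i : Lam K m N) ^ N ≠ 0) (d : Fin N → K)
    (h : ∑ s : Fin N, d s • ((xx i) ^ (s : ℕ) * a K m N i) = 0) (s : Fin N) : d s = 0 := by
  have h' : ∑ s : Fin N, d s • (xx i : Lam K m N) ^ ((s : ℕ) + 1) = 0 := by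
    have := congrArg (· * ab K m N i) h
    simpa [Finset.sum_mul, xs'] using this
  obtain ⟨s, hs⟩ := s
  induction s using Nat.strong_induction_on with
  | _ s ih =>
    have h2 := congrArg (· * (xx i : Lam K m N) ^ (N - 1 - s)) h'
    simp only [Finset.sum_mul, zero_mul, smul_mul_assoc, ← pow_add] at h2
    rw [Finset.sum_eq_single ⟨s, hs⟩] at h2
    · have : s + 1 + (N - 1 - s) = N := by omega
      simp only [this] at h2
      exact (smul_eq_zero.mp h2).resolve_right hx
    · rintro ⟨t, ht⟩ _ hne
      have hne : t ≠ s := by simpa using hne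
      rcases lt_or_gt_of_ne hne with hl | hl
      · rw [ih t hl ht, zero_smul]
      · rw [xbig hN, smul_zero]; simp only; omega
    · simp

/-- reduced diagonal family -/
def ww (p : ZMod m × Fin N) : Lam K m N := e K m N p.1 * xx p.1 ^ (p.2 : ℕ)

theorem diag_mem (hm : 2 ≤ m) (hN : 1 ≤ N) (z : Lam K m N) : ∑ i, e K m N i * z * e K m N i ∈
    Submodule.span K (Set.range (centreBasisFam K m N)) ⊔ Submodule.span K (Set.range (ww (K := K) (m := m) (N := N))) := by
  set C := Submodule.span K (Set.range (centreBasisFam K m N)) with hC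
  set D := Submodule.span K (Set.range (ww (K := K) (m := m) (N := N))) with hD
  have hz : z ∈ Submodule.span K {z : Lam K m N | SpanSet z} := by rw [span_top]; trivial
  have hne : ∀ i : ZMod m, i ≠ i + 1 := by
    intro i h
    have : Fact (1 < m) := ⟨hm⟩
    exact one_ne_zero (left_eq_add.mp h)
  have hCs : ∀ k, centreBasisFam K m N k ∈ C ⊔ D := fun k =>
    (le_sup_left : C ≤ C ⊔ D) (Submodule.subset_span ⟨k, rfl⟩)
  have hDs : ∀ k, ww k ∈ C ⊔ D := fun k =>
    (le_sup_right : D ≤ C ⊔ D) (Submodule.subset_span ⟨k, rfl⟩)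
  have hex : ∀ i s, e K m N i * xx i ^ s ∈ C ⊔ D := by
    intro i s
    rcases lt_trichotomy s N with h | h | h
    · exact hDs (i, ⟨s, h⟩)
    · obtain ⟨t, rfl⟩ : ∃ t, s = t + 1 := ⟨s - 1, by omega⟩
      rw [ex, if_pos rfl, h]; exact hCs (Sum.inr (Sum.inl i))
    · rw [xbig hN i h, mul_zero]; exact Submodule.zero_mem _
  have hy : ∀ i s, (yy i : Lam K m N) ^ (s+1) ∈ C ⊔ D := by
    intro i s
    rcases lt_trichotomy (s+1) N with h | h | h
    · have h1 := hCs (Sum.inr (Sum.inr (i, ⟨s, by omega⟩)))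
      change xx i ^ (s+1) + yy i ^ (s+1) ∈ _ at h1
      have h2 := hex i (s+1)
      rw [ex, if_pos rfl] at h2
      simpa using Submodule.sub_mem _ h1 h2
    · have := xyN (K := K) (N := N) (i+1)
      rw [add_sub_cancel_right] at this
      rw [h, ← this]; exact hCs (Sum.inr (Sum.inl _))
    · rw [ybig hN i h]; exact Submodule.zero_mem _
  induction hz using Submodule.span_induction with
  | mem x h =>
    rcases h with ⟨i, s⟩ | ⟨i, s⟩ | ⟨i, s⟩ | ⟨i, s⟩
    · refine Submodule.sum_mem _ fun j _ => ?_
      by_cases h : j = i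
      · subst h
        rw [← mul_assoc, e_idem]
        rcases e_cases (K := K) (N := N) j s with h | ⟨t, h⟩
        · rw [h, e_idem]; simpa using hex j 0
        · rw [h, xe, if_pos rfl, ← h]; exact hex j s
      · rw [← mul_assoc, e_orth h]; simp
    · refine Submodule.sum_mem _ fun j _ => ?_
      rw [ey]; split_ifs with h
      · rw [ye, if_pos h]; exact hy i s
      · simp
    · refine Submodule.sum_mem _ fun j _ => ?_
      rw [exa]; split_ifs with h
      · rw [mul_assoc, ae', if_neg (h ▸ hne j)]; simp
      · simp
    · refine Submodule.sum_mem _ fun j _ => ?_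
      rw [eyb]; split_ifs with h
      · rw [mul_assoc, be', if_neg (h ▸ (hne i).symm)]; simp
      · simp
  | zero => simp
  | add x y _ _ hx hy => simp only [mul_add, add_mul, Finset.sum_add_distrib]; exact Submodule.add_mem _ hx hy
  | smul c x _ hx =>
    simp only [mul_smul_comm, smul_mul_assoc, ← Finset.smul_sum]; exact Submodule.smul_mem _ c hx

theorem center_le (hm : 2 ≤ m) (hN : 1 ≤ N) (hx : ∀ i, (xx i : Lam K m N) ^ N ≠ 0)
    (z : Lam K m N) (hz : z ∈ Subalgebra.center K (Lam K m N)) :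
    z ∈ Submodule.span K (Set.range (centreBasisFam K m N)) := by
  have h1 := diag_mem hm hN z
  have h2 : ∑ i, e K m N i * z * e K m N i = z := by
    rw [Subalgebra.mem_center_iff] at hz
    have : ∀ i, e K m N i * z * e K m N i = e K m N i * z := by
      intro i; rw [mul_assoc, ← hz, ← mul_assoc, e_idem]
    simp only [this]
    rw [← Finset.sum_mul, e_sum, one_mul]
  rw [h2, Submodule.mem_sup] at h1
  obtain ⟨c, hc, w, hw, rfl⟩ := h1
  refine Submodule.add_mem _ hc ?_
  have hcc : c ∈ Subalgebra.center K (Lam K m N) := by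
    have : Submodule.span K (Set.range (centreBasisFam K m N)) ≤
        Subalgebra.toSubmodule (Subalgebra.center K (Lam K m N)) := by
      rw [Submodule.span_le]; rintro _ ⟨k, rfl⟩; exact fam_center hN k
    exact this hc
  have hwc : w ∈ Subalgebra.center K (Lam K m N) := by
    simpa using Subalgebra.sub_mem _ hz hcc
  rw [Subalgebra.mem_center_iff] at hwc
  rw [Submodule.mem_span_range_iff_exists_fun] at hw
  obtain ⟨f, rfl⟩ := hw
  obtain ⟨M, rfl⟩ : ∃ M, N = M + 1 := ⟨N - 1, by omega⟩
  have hwa : ∀ j, (∑ p, f p • ww p) * a K m (M+1) j =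
      ∑ s : Fin (M+1), f (j, s) • (xx j ^ (s:ℕ) * a K m (M+1) j) := by
    intro j
    rw [Finset.sum_mul, Fintype.sum_prod_type, Finset.sum_eq_single j]
    · refine Finset.sum_congr rfl fun s _ => ?_
      rw [smul_mul_assoc, ww, mul_assoc, exa, if_pos rfl]
    · intro i _ hi
      refine Finset.sum_eq_zero fun s _ => ?_
      rw [smul_mul_assoc, ww]
      rcases e_cases (K := K) (N := M+1) i s with h | ⟨t, h⟩
      · simp only [h]; rw [ea', if_neg hi, smul_zero]
      · simp only [h]; rw [xa', if_neg hi.symm, smul_zero]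
    · simp
  have haw : ∀ j, a K m (M+1) j * (∑ p, f p • ww p) = f (j+1, 0) • a K m (M+1) j := by
    intro j
    rw [Finset.mul_sum, Finset.sum_eq_single (j+1, 0)]
    · simp [ww, ae]
    · rintro ⟨i, s⟩ _ hne
      rw [mul_smul_comm, ww]
      by_cases hi : i = j + 1
      · have hs : s ≠ 0 := by rintro rfl; exact hne (by rw [hi])
        obtain ⟨t, rfl⟩ := Fin.exists_succ_eq.mpr hs
        simp only [Fin.val_succ]
        rw [ex, if_pos rfl, ax, smul_zero]
      · rw [← mul_assoc, ae', if_neg hi]; simp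
    · simp
  have hd : ∀ j s, f (j, s) = if s = 0 then f (j+1, 0) else 0 := by
    intro j s
    have h := lin_indep hN j (hx j) (fun s => f (j,s) - if s = 0 then f (j+1, 0) else 0) ?_ s
    · exact sub_eq_zero.mp h
    · have hs : ∀ (c d : K) (z : Lam K m (M+1)), (c - d) • z = c • z - d • z :=
        fun c d z => sub_smul c d z
      have h3 := (hwa j).symm.trans ((hwc _).symm.trans (haw j))
      simp only [hs]
      refine (Finset.sum_sub_distrib _ _).trans ?_
      rw [h3]
      simp
  have hconst : ∀ j, f (j, 0) = f (0, 0) := by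
    have : ∀ n : ℕ, f ((n : ZMod m), 0) = f (0, 0) := by
      intro n
      induction n with
      | zero => simp
      | succ n ih => rw [← ih, hd n 0]; simp
    intro j
    have := this j.val
    rwa [ZMod.natCast_zmod_val] at this
  have : ∑ p, f p • ww p = f (0,0) • (1 : Lam K m (M+1)) := by
    rw [← e_sum, Finset.smul_sum, Fintype.sum_prod_type]
    refine Finset.sum_congr rfl fun i _ => ?_
    rw [Finset.sum_eq_single 0]
    · rw [hconst]; simp [ww]
    · intro s _ hs; rw [hd, if_neg hs, zero_smul]
    · simp
  rw [this]
  exact Submodule.smul_mem _ _ (Submodule.subset_span ⟨Sum.inl (), rfl⟩)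

theorem fam_indep (hN : 1 ≤ N) (hx : ∀ i, (xx i : Lam K m N) ^ N ≠ 0) :
    LinearIndependent K (centreBasisFam K m N) := by
  obtain ⟨M, rfl⟩ : ∃ M, N = M + 1 := ⟨N - 1, by omega⟩
  rw [Fintype.linearIndependent_iff]
  intro g hg
  rw [Fintype.sum_sum_type, Fintype.sum_sum_type, Fintype.sum_prod_type] at hg
  have hg : g (Sum.inl ()) • (1 : Lam K m (M+1)) +
    (∑ i, g (Sum.inr (Sum.inl i)) • (xx i : Lam K m (M+1)) ^ (M+1) +
     ∑ i, ∑ s : Fin M, g (Sum.inr (Sum.inr (i, s))) •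
      ((xx i : Lam K m (M+1)) ^ ((s:ℕ)+1) + yy i ^ ((s:ℕ)+1))) = 0 := by
    rw [← hg]; simp only [Finset.univ_unique, Finset.sum_singleton]; rfl
  have key : ∀ j, g (Sum.inl ()) = 0 ∧ ∀ s, g (Sum.inr (Sum.inr (j, s))) = 0 := by
    intro j
    have h := lin_indep hN j (hx j)
      (Fin.cons (g (Sum.inl ())) (fun s => g (Sum.inr (Sum.inr (j, s)))) : Fin (M+1) → K) ?_
    · exact ⟨by simpa using h 0, fun s => by simpa using h s.succ⟩
    · have h := congrArg (· * a K m (M+1) j) hg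
      have xa2 : ∀ (i : ZMod m) (s : ℕ), xx i ^ (s+1) * a K m (M+1) j =
          if j = i then a K m (M+1) j * yy j ^ (s+1) else 0 := by
        intro i s; rw [xa']; split_ifs with h
        · rw [← h, xa]
        · rfl
      simp only [add_mul, Finset.sum_mul, smul_mul_assoc, xNa hN, xa2, yal, zero_mul, smul_zero,
        Finset.sum_const_zero, zero_add, add_zero, one_mul, smul_ite] at h
      rw [Fin.sum_univ_succ]
      simp only [Fin.cons_zero, Fin.cons_succ, Fin.val_zero, Fin.val_succ, pow_zero, one_mul]
      rw [← h]
      congr 1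
      rw [Finset.sum_eq_single j]
      · simp only [if_true, xa]
      · intro i _ hi; simp [hi.symm]
      · simp
  have h0 : g (Sum.inl ()) = 0 := (key 0).1
  rw [h0] at hg
  simp only [(key _).2, zero_smul, Finset.sum_const_zero, zero_add, add_zero] at hg
  rintro (_ | j | ⟨j, s⟩)
  · exact h0
  · have h := congrArg (e K m (M+1) j * ·) hg
    simp only [Finset.mul_sum, mul_smul_comm, ex, mul_zero] at h
    simp only [smul_ite, smul_zero, Finset.sum_ite_eq, Finset.mem_univ, if_true] at h
    exact (smul_eq_zero.mp h).resolve_right (hx j)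
  · exact (key j).2 s

end Rels

section Rep

/-- Kleisli composition -/
def kc {X : Type} (g h : X → Option X) : X → Option X := fun n => (g n).bind h

/-- Kleisli power -/
def kpow {X : Type} (g : X → Option X) : ℕ → X → Option X
  | 0 => some
  | k + 1 => kc (kpow g k) g

/-- operator of a partial map -/
def op {X : Type} (g : X → Option X) : Module.End K (X → K) where
  toFun f n := (g n).elim 0 f
  map_add' f f' := by funext n; cases h : g n <;> simp [h]
  map_smul' c f := by funext n; cases h : g n <;> simp [h]

variable {K}

theorem op_apply {X : Type} (g : X → Option X) (f : X → K) (n : X) : op K g f n = (g n).elim 0 f := rfl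

theorem op_mul {X : Type} (g h : X → Option X) : op K g * op K h = op K (kc g h) := by
  ext f n
  simp only [Module.End.mul_apply, op_apply, kc]
  cases g n <;> simp [op_apply]

theorem op_pow {X : Type} (g : X → Option X) (k : ℕ) : op K g ^ k = op K (kpow g k) := by
  induction k with
  | zero => ext f n; simp [op_apply, kpow]
  | succ k ih => rw [pow_succ, ih, op_mul]; rfl

theorem op_none {X : Type} : op K (fun _ : X => none) = 0 := by
  ext f n; simp [op_apply]

variable {m}

/-- alpha -/
def al (N : ℕ) (n : ℤ) : Option ℤ :=
  if n % 2 = 0 ∧ 0 ≤ n ∧ n < 2 * N then some (n + 1)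
  else if n % 2 = 1 ∧ n < 0 ∧ -(2 * N : ℤ) < n then
    (if n = -(2 * N : ℤ) + 1 then some (2 * N) else some (n - 1))
  else none

/-- beta -/
def be_ (N : ℕ) (n : ℤ) : Option ℤ :=
  if n % 2 = 1 ∧ 0 < n ∧ n < 2 * N then some (n + 1)
  else if n % 2 = 0 ∧ n ≤ 0 ∧ -(2 * N : ℤ) < n then some (n - 1)
  else none

/-- vertex -/
def vt (i : ZMod m) (n : ℤ) : ZMod m :=
  if n % 2 = 0 then i else if 0 < n then i + 1 else i - 1

theorem vt_al (N : ℕ) (i : ZMod m) (n n' : ℤ) (h : al N n = some n') : vt i n' = vt i n + 1 := by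
  unfold al at h
  split_ifs at h with h1 h2 h3 <;> simp only [Option.some.injEq, reduceCtorEq] at h <;> subst h <;> unfold vt
  · rw [if_neg (by omega), if_pos (by omega), if_pos (by omega)]
  · rw [if_pos (by omega), if_neg (by omega), if_neg (by omega)]; ring
  · rw [if_pos (by omega), if_neg (by omega), if_neg (by omega)]; ring

theorem vt_be (N : ℕ) (i : ZMod m) (n n' : ℤ) (h : be_ N n = some n') : vt i n = vt i n' + 1 := by
  unfold be_ at h
  split_ifs at h with h1 h2 <;> simp only [Option.some.injEq, reduceCtorEq] at h <;> subst h <;> unfold vt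
  · rw [if_neg (by omega), if_pos (by omega), if_pos (by omega)]
  · rw [if_pos (by omega), if_neg (by omega), if_neg (by omega)]; ring

theorem al_al (N : ℕ) (n n' : ℤ) (h : al N n = some n') : al N n' = none := by
  unfold al at h
  split_ifs at h with h1 h2 h3 <;> simp only [Option.some.injEq, reduceCtorEq] at h <;> subst h <;>
    unfold al <;> rw [if_neg (by omega), if_neg (by omega)]

theorem be_be (N : ℕ) (n n' : ℤ) (h : be_ N n = some n') : be_ N n' = none := by
  unfold be_ at h
  split_ifs at h with h1 h2 <;> simp only [Option.some.injEq, reduceCtorEq] at h <;> subst h <;>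
    unfold be_ <;> rw [if_neg (by omega), if_neg (by omega)]

theorem phi_eq (N : ℕ) (n : ℤ) : kc (al N) (be_ N) n =
    if n % 2 = 0 ∧ 0 ≤ n ∧ n + 2 ≤ 2 * N then some (n + 2)
    else if n % 2 = 1 ∧ n < 0 ∧ -(2 * N : ℤ) < n - 2 then some (n - 2) else none := by
  unfold kc al
  split_ifs <;> simp only [Option.bind_some, Option.bind_none] <;> (try unfold be_) <;>
    (try split_ifs) <;> first | rfl | omega | (congr 1; omega)

theorem psi_eq (N : ℕ) (n : ℤ) : kc (be_ N) (al N) n =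
    if n % 2 = 1 ∧ 0 < n ∧ n + 2 < 2 * N then some (n + 2)
    else if n % 2 = 0 ∧ n ≤ 0 ∧ -(2 * N : ℤ) ≤ n - 2 then
      (if n - 2 = - (2 * N : ℤ) then some (2 * N) else some (n - 2)) else none := by
  unfold kc be_
  split_ifs <;> simp only [Option.bind_some, Option.bind_none] <;> (try unfold al) <;>
    (try split_ifs) <;> first | rfl | omega | (congr 1; omega)

theorem phi_pow (N : ℕ) (k : ℕ) (n : ℤ) : kpow (kc (al N) (be_ N)) (k+1) n =
    if n % 2 = 0 ∧ 0 ≤ n ∧ n + 2 * (k+1) ≤ 2 * N then some (n + 2 * (k+1))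
    else if n % 2 = 1 ∧ n < 0 ∧ -(2 * N : ℤ) < n - 2 * (k+1) then some (n - 2 * (k+1)) else none := by
  induction k with
  | zero => rw [kpow, kpow, kc, Option.bind_some, phi_eq]; simp
  | succ k ih =>
    rw [kpow, kc, ih]; push_cast
    split_ifs <;> simp only [Option.bind_some, Option.bind_none] <;> (try rw [phi_eq]) <;>
    (try split_ifs) <;> first | rfl | omega | (congr 1; omega)

theorem psi_pow (N : ℕ) (k : ℕ) (n : ℤ) : kpow (kc (be_ N) (al N)) (k+1) n =
    if n % 2 = 1 ∧ 0 < n ∧ n + 2 * (k+1) < 2 * N then some (n + 2 * (k+1))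
    else if n % 2 = 0 ∧ n ≤ 0 ∧ -(2 * N : ℤ) ≤ n - 2 * (k+1) then
      (if n - 2 * (k+1) = - (2 * N : ℤ) then some (2 * N) else some (n - 2 * (k+1))) else none := by
  induction k with
  | zero => rw [kpow, kpow, kc, Option.bind_some, psi_eq]; simp
  | succ k ih =>
    rw [kpow, kc, ih]; push_cast
    split_ifs <;> simp only [Option.bind_some, Option.bind_none] <;> (try rw [psi_eq]) <;>
    (try split_ifs) <;> first | rfl | omega | (congr 1; omega)

theorem phi_psi (N : ℕ) (hN : 1 ≤ N) (n : ℤ) :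
    kpow (kc (al N) (be_ N)) N n = kpow (kc (be_ N) (al N)) N n := by
  obtain ⟨M, rfl⟩ : ∃ M, N = M + 1 := ⟨N - 1, by omega⟩
  rw [phi_pow, psi_pow]; push_cast
  split_ifs <;> first | rfl | omega | (congr 1; omega)

/-- restriction -/
def rs (i : ZMod m) (j : ZMod m) (g : ℤ → Option ℤ) (n : ℤ) : Option ℤ :=
  if vt i n = j then g n else none

theorem kc_rs (i j k : ZMod m) (g h : ℤ → Option ℤ) (H : ∀ n n', g n = some n' → vt i n = j → vt i n' = k) :
    kc (rs i j g) (rs i k h) = rs i j (kc g h) := by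
  funext n
  unfold kc rs
  split_ifs with h1
  · cases h2 : g n with
    | none => simp [h2]
    | some n' => simp [H n n' h2 h1, h2]
  · rfl

theorem kpow_rs (i j : ZMod m) (g : ℤ → Option ℤ) (H : ∀ n n', g n = some n' → vt i n' = vt i n) (k : ℕ) :
    kpow (rs i j g) (k+1) = rs i j (kpow g (k+1)) ∧
      ∀ n n', kpow g (k+1) n = some n' → vt i n' = vt i n := by
  induction k with
  | zero => exact ⟨rfl, H⟩
  | succ k ih =>
    constructor
    · rw [kpow, ih.1, kc_rs]
      · rfl
      · intro n n' h h'; rw [ih.2 n n' h, h']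
    · intro n n' h
      rw [kpow, kc, Option.bind_eq_some_iff] at h
      obtain ⟨p, hp, hp'⟩ := h
      rw [H _ _ hp', ih.2 _ _ hp]

theorem kc_vt_phi (N : ℕ) (i : ZMod m) (n n' : ℤ) (h : kc (al N) (be_ N) n = some n') : vt i n' = vt i n := by
  rw [kc, Option.bind_eq_some_iff] at h
  obtain ⟨p, hp, hp'⟩ := h
  have h1 := vt_al N i _ _ hp
  have h2 := vt_be N i _ _ hp'
  rw [h1] at h2; exact (add_right_cancel h2).symm

theorem kc_vt_psi (N : ℕ) (i : ZMod m) (n n' : ℤ) (h : kc (be_ N) (al N) n = some n') : vt i n' = vt i n := by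
  rw [kc, Option.bind_eq_some_iff] at h
  obtain ⟨p, hp, hp'⟩ := h
  have h1 := vt_be N i _ _ hp
  have h2 := vt_al N i _ _ hp'
  rw [h2, h1]

theorem kc_some_left (g : ℤ → Option ℤ) : kc some g = g := rfl
theorem kc_some_right (g : ℤ → Option ℤ) : kc g some = g := by funext n; simp [kc]

variable (K) in
/-- generator images -/
def repGen (N : ℕ) (i : ZMod m) : Gen m → Module.End K (ℤ → K)
  | .e j => op K (rs i j some)
  | .a j => op K (rs i j (al N))
  | .abar j => op K (rs i (j+1) (be_ N))

theorem vt_be' (N : ℕ) (i j : ZMod m) (n n' : ℤ) (h : be_ N n = some n') (h' : vt i n = j + 1) : vt i n' = j := by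
  rw [vt_be N i n n' h] at h'; exact add_right_cancel h'
theorem vt_al' (N : ℕ) (i j : ZMod m) (n n' : ℤ) (h : al N n = some n') (h' : vt i n = j) : vt i n' = j + 1 := by
  rw [vt_al N i n n' h, h']

theorem rs_none (i j : ZMod m) : rs i j (fun _ => none) = fun _ => none := by
  funext n; simp [rs]

theorem rep_rel (N : ℕ) (hN : 1 ≤ N) (i : ZMod m) {x y : FreeAlgebra K (Gen m)} (h : LamRel K m N x y) :
    FreeAlgebra.lift K (repGen K N i) x = FreeAlgebra.lift K (repGen K N i) y := by
  cases h with
  | idem j =>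
    simp only [Efree, map_mul, FreeAlgebra.lift_ι_apply, repGen, op_mul]
    rw [kc_rs _ _ _ _ _ (by rintro n n' ⟨⟩ h; exact h)]; rfl
  | orth j k hjk =>
    simp only [Efree, map_mul, FreeAlgebra.lift_ι_apply, repGen, op_mul, map_zero]
    rw [← op_none]; congr 1
    funext n
    unfold kc rs
    split_ifs with h1
    · simp [h1, hjk]
    · rfl
  | sum_e =>
    simp only [Efree, map_sum, FreeAlgebra.lift_ι_apply, repGen, map_one]
    ext1 f; funext n
    rw [LinearMap.sum_apply, Finset.sum_apply]
    simp only [op_apply, rs]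
    rw [Finset.sum_eq_single (vt i n)]
    · simp
    · intro b _ hb; rw [if_neg hb.symm]; rfl
    · simp
  | src_a j =>
    simp only [Efree, Afree, map_mul, FreeAlgebra.lift_ι_apply, repGen, op_mul]
    rw [kc_rs _ _ _ _ _ (by rintro n n' ⟨⟩ h; exact h)]; rfl
  | tgt_a j =>
    simp only [Efree, Afree, map_mul, FreeAlgebra.lift_ι_apply, repGen, op_mul]
    rw [kc_rs _ _ _ _ _ (vt_al' N i j), kc_some_right]
  | src_ab j =>
    simp only [Efree, ABfree, map_mul, FreeAlgebra.lift_ι_apply, repGen, op_mul]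
    rw [kc_rs _ _ _ _ _ (by rintro n n' ⟨⟩ h; exact h)]; rfl
  | tgt_ab j =>
    simp only [Efree, ABfree, map_mul, FreeAlgebra.lift_ι_apply, repGen, op_mul]
    rw [kc_rs _ _ _ _ _ (vt_be' N i j), kc_some_right]
  | zero_aa j =>
    simp only [Afree, map_mul, FreeAlgebra.lift_ι_apply, repGen, op_mul, map_zero]
    rw [kc_rs _ _ _ _ _ (vt_al' N i j), ← op_none, ← rs_none i j]; congr 2
    funext n; unfold kc
    cases h : al N n with
    | none => rfl
    | some n' => simp [al_al N n n' h]
  | zero_abab j =>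
    simp only [ABfree, map_mul, FreeAlgebra.lift_ι_apply, repGen, op_mul, map_zero]
    rw [sub_add_cancel, kc_rs _ _ _ _ _ (vt_be' N i j), ← op_none, ← rs_none i (j+1)]; congr 2
    funext n; unfold kc
    cases h : be_ N n with
    | none => rfl
    | some n' => simp [be_be N n n' h]
  | comm j =>
    simp only [Afree, ABfree, map_mul, map_pow, FreeAlgebra.lift_ι_apply, repGen, op_mul, op_pow]
    rw [sub_add_cancel, kc_rs _ _ _ _ _ (vt_al' N i j), kc_rs]
    · obtain ⟨M, hM⟩ : ∃ M, N = M + 1 := ⟨N - 1, by omega⟩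
      have h1 := (kpow_rs i j _ (kc_vt_phi N i) M).1
      have h2 := (kpow_rs i j _ (kc_vt_psi N i) M).1
      rw [← hM] at h1 h2
      rw [h1, h2]; congr 2
      funext n; exact phi_psi N hN n
    · intro n n' h h'; exact vt_be' N i _ n n' h (by rw [h']; ring)

theorem x_ne (N : ℕ) (hN : 1 ≤ N) (i : ZMod m) : (xx i : Lam K m N) ^ N ≠ 0 := by
  intro h0
  let F : Lam K m N →ₐ[K] Module.End K (ℤ → K) :=
    RingQuot.liftAlgHom K ⟨FreeAlgebra.lift K (repGen K N i), fun {x y} h => rep_rel N hN i h⟩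
  have h1 := congrArg F h0
  have ha : F (a K m N i) = op K (rs i i (al N)) := by
    simp only [F, a, RingQuot.liftAlgHom_mkAlgHom_apply, Afree, FreeAlgebra.lift_ι_apply, repGen]
  have hb : F (ab K m N i) = op K (rs i (i+1) (be_ N)) := by
    simp only [F, ab, RingQuot.liftAlgHom_mkAlgHom_apply, ABfree, FreeAlgebra.lift_ι_apply, repGen]
  rw [map_pow, xx, map_mul, ha, hb, map_zero, op_mul, kc_rs _ _ _ _ _ (vt_al' N i i), op_pow] at h1
  obtain ⟨M, hM⟩ : ∃ M, N = M + 1 := ⟨N - 1, by omega⟩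
  have h2 := (kpow_rs i i _ (kc_vt_phi N i) M).1
  have h3 := phi_pow N M 0
  rw [← hM] at h2 h3
  rw [h2] at h1
  have h4 := congrFun (LinearMap.congr_fun h1 (fun _ => (1 : K))) 0
  rw [op_apply, rs, if_pos (by simp [vt]), h3, if_pos (by omega)] at h4
  simp at h4

end Rep

theorem stmt3 (hm : 2 ≤ m) (hN : 1 ≤ N) :
    Module.finrank K (Subalgebra.center K (Lam K m N)) = N * m + 1 ∧
    LinearIndependent K (centreBasisFam K m N) ∧
    Submodule.span K (Set.range (centreBasisFam K m N)) =
      Subalgebra.toSubmodule (Subalgebra.center K (Lam K m N)) := by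
  have hx := fun i : ZMod m => x_ne (K := K) N hN i
  have hli := fam_indep hN hx
  have hsp : Submodule.span K (Set.range (centreBasisFam K m N)) =
      Subalgebra.toSubmodule (Subalgebra.center K (Lam K m N)) := by
    apply le_antisymm
    · rw [Submodule.span_le]; rintro _ ⟨k, rfl⟩; exact fam_center hN k
    · intro z hz; exact center_le hm hN hx z hz
  refine ⟨?_, hli, hsp⟩
  have h := finrank_span_eq_card hli
  rw [hsp] at h
  refine h.trans ?_
  obtain ⟨M, rfl⟩ : ∃ M, N = M + 1 := ⟨N - 1, by omega⟩
  simp [ZMod.card]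
  ring
end

section
/- Let K be a field, N > 1, m ≥ 2, and Λ_N as above. For each i set f_i = a_i ā_i + ā_i a_i ∈ Z(Λ_N). Then f_i^s = (a_i ā_i)^s + (ā_i a_i)^s in Λ_N for every 1 ≤ s ≤ N-1, and f_i^N = (a_i ā_i)^N + (ā_i a_i)^N. Consequently the centre Z(Λ_N) is generated as a K-algebra by {1} ∪ {(a_i ā_i)^N : i} ∪ {a_i ā_i + ā_i a_i : i}. -/
variable (K : Type) [Field K] (m N : ℕ) [NeZero m]

/-- `f_i = a_i ā_i + ā_i a_i`. -/
def f (i : ZMod m) : Lam K m N := a K m N i * ab K m N i + ab K m N i * a K m N i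

section Aux

/-- The relations, abstractly. -/
structure LR {m : ℕ} [NeZero m] (N : ℕ) {A : Type} [Ring A] (e a b : ZMod m → A) : Prop where
  idem : ∀ i, e i * e i = e i
  orth : ∀ i j, i ≠ j → e i * e j = 0
  sum_e : ∑ i, e i = 1
  src_a : ∀ i, e i * a i = a i
  tgt_a : ∀ i, a i * e (i + 1) = a i
  src_b : ∀ i, e (i + 1) * b i = b i
  tgt_b : ∀ i, b i * e i = b i
  zero_aa : ∀ i, a i * a (i + 1) = 0
  zero_bb : ∀ i, b i * b (i - 1) = 0
  comm : ∀ i, (a i * b i) ^ N = (b (i - 1) * a (i - 1)) ^ N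

namespace LR

variable {m N : ℕ} [NeZero m] {A : Type} [Ring A] {e a b : ZMod m → A}

theorem ne_succ (hm : 2 ≤ m) (i : ZMod m) : i + 1 ≠ i := by
  have : Fact (1 < m) := ⟨hm⟩
  intro h
  exact one_ne_zero (add_eq_left.mp h)

theorem ee (h : LR N e a b) (i j : ZMod m) : e i * e j = if i = j then e i else 0 := by
  split_ifs with hij
  · rw [← hij, h.idem]
  · exact h.orth i j hij

theorem ea (h : LR N e a b) (i j : ZMod m) : e i * a j = if i = j then a j else 0 := by
  rw [← h.src_a j, ← mul_assoc, h.ee]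
  split_ifs with hij
  · rw [hij]
  · simp

theorem ae (h : LR N e a b) (i j : ZMod m) : a i * e j = if i + 1 = j then a i else 0 := by
  rw [← h.tgt_a i, mul_assoc, h.ee]
  split_ifs with hij <;> simp

theorem eb (h : LR N e a b) (i j : ZMod m) : e i * b j = if i = j + 1 then b j else 0 := by
  rw [← h.src_b j, ← mul_assoc, h.ee]
  split_ifs with hij
  · rw [hij]
  · simp

theorem be (h : LR N e a b) (i j : ZMod m) : b i * e j = if i = j then b i else 0 := by
  rw [← h.tgt_b i, mul_assoc, h.ee]
  split_ifs with hij <;> simp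

theorem aa (h : LR N e a b) (i j : ZMod m) : a i * a j = 0 := by
  by_cases hij : i + 1 = j
  · rw [← hij, h.zero_aa]
  · rw [← h.tgt_a i, mul_assoc, h.ea, if_neg hij, mul_zero]

theorem bb (h : LR N e a b) (i j : ZMod m) : b i * b j = 0 := by
  by_cases hij : i = j + 1
  · have := h.zero_bb i
    rwa [hij, add_sub_cancel_right, ← hij] at this
  · rw [← h.tgt_b i, mul_assoc, h.eb, if_neg hij, mul_zero]

theorem ab (h : LR N e a b) (i j : ZMod m) : a i * b j = if i = j then a i * b i else 0 := by
  split_ifs with hij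
  · rw [hij]
  · rw [← h.tgt_a i, mul_assoc, h.eb, if_neg (by simpa using hij), mul_zero]

theorem ba (h : LR N e a b) (i j : ZMod m) : b i * a j = if i = j then b i * a i else 0 := by
  split_ifs with hij
  · rw [hij]
  · rw [← h.tgt_b i, mul_assoc, h.ea, if_neg hij, mul_zero]

theorem xy (h : LR N e a b) (i j : ZMod m) : (a i * b i) * (b j * a j) = 0 := by
  rw [mul_assoc, ← mul_assoc (b i), h.bb, zero_mul, mul_zero]

theorem yx (h : LR N e a b) (i j : ZMod m) : (b i * a i) * (a j * b j) = 0 := by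
  rw [mul_assoc, ← mul_assoc (a i), h.aa, zero_mul, mul_zero]

theorem f_pow (h : LR N e a b) (i : ZMod m) (s : ℕ) :
    (a i * b i + b i * a i) ^ (s + 1) = (a i * b i) ^ (s + 1) + (b i * a i) ^ (s + 1) := by
  induction s with
  | zero => simp
  | succ s ih =>
    rw [pow_succ, ih, add_mul, mul_add, mul_add, pow_succ (a i * b i) s, pow_succ (b i * a i) s,
      mul_assoc _ (a i * b i) (b i * a i), h.xy, mul_assoc _ (b i * a i) (a i * b i), h.yx]
    simp [pow_succ]

theorem xN_b (h : LR N e a b) (hN : 1 < N) (i j : ZMod m) : (a i * b i) ^ N * b j = 0 := by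
  obtain ⟨n, rfl⟩ : ∃ n, N = n + 1 := ⟨N - 1, by omega⟩
  rw [pow_succ, mul_assoc, mul_assoc (a i), h.bb]; simp

theorem xN_a (h : LR N e a b) (hN : 1 < N) (i j : ZMod m) : (a i * b i) ^ N * a j = 0 := by
  rw [h.comm]
  obtain ⟨n, rfl⟩ : ∃ n, N = n + 1 := ⟨N - 1, by omega⟩
  rw [pow_succ, mul_assoc, mul_assoc (b _), h.aa]; simp

theorem a_xN (h : LR N e a b) (hN : 1 < N) (i j : ZMod m) : a j * (a i * b i) ^ N = 0 := by
  obtain ⟨n, rfl⟩ : ∃ n, N = n + 1 := ⟨N - 1, by omega⟩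
  rw [pow_succ', ← mul_assoc, ← mul_assoc, h.aa]; simp

theorem b_xN (h : LR N e a b) (hN : 1 < N) (i j : ZMod m) : b j * (a i * b i) ^ N = 0 := by
  rw [h.comm]
  obtain ⟨n, rfl⟩ : ∃ n, N = n + 1 := ⟨N - 1, by omega⟩
  rw [pow_succ', ← mul_assoc, ← mul_assoc, h.bb]; simp

theorem e_x (h : LR N e a b) (i j : ZMod m) :
    e j * (a i * b i) = if j = i then a i * b i else 0 := by
  rw [← mul_assoc, h.ea]; split_ifs <;> simp
theorem x_e (h : LR N e a b) (i j : ZMod m) :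
    (a i * b i) * e j = if i = j then a i * b i else 0 := by
  rw [mul_assoc, h.be]; split_ifs <;> simp
theorem e_y (h : LR N e a b) (i j : ZMod m) :
    e j * (b i * a i) = if j = i + 1 then b i * a i else 0 := by
  rw [← mul_assoc, h.eb]; split_ifs <;> simp
theorem y_e (h : LR N e a b) (i j : ZMod m) :
    (b i * a i) * e j = if i + 1 = j then b i * a i else 0 := by
  rw [mul_assoc, h.ae]; split_ifs <;> simp

/-- `e` commutes with powers of `x`. -/
theorem comm_e_x (h : LR N e a b) (i j : ZMod m) : Commute (e j) (a i * b i) := by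
  show _ = _
  rw [h.e_x, h.x_e]; simp [eq_comm]
theorem comm_e_y (h : LR N e a b) (i j : ZMod m) : Commute (e j) (b i * a i) := by
  show _ = _
  rw [h.e_y, h.y_e]; simp [eq_comm]

variable {K : Type} [Field K] [Algebra K A]

theorem central_of (hgen : Algebra.adjoin K (Set.range e ∪ Set.range a ∪ Set.range b) = ⊤)
    (z : A) (h1 : ∀ j, Commute (e j) z) (h2 : ∀ j, Commute (a j) z) (h3 : ∀ j, Commute (b j) z) :
    z ∈ Subalgebra.center K A := by
  rw [Subalgebra.mem_center_iff]
  intro w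
  have hw : w ∈ Algebra.adjoin K (Set.range e ∪ Set.range a ∪ Set.range b) := by simp [hgen]
  induction hw using Algebra.adjoin_induction with
  | mem x hx =>
    rcases hx with (⟨j, rfl⟩ | ⟨j, rfl⟩) | ⟨j, rfl⟩
    · exact h1 j
    · exact h2 j
    · exact h3 j
  | algebraMap r => exact Algebra.commutes r z
  | add x y _ _ hx hy => rw [add_mul, mul_add, hx, hy]
  | mul x y _ _ hx hy => rw [mul_assoc, hy, ← mul_assoc, hx, mul_assoc]

theorem f_central (h : LR N e a b)
    (hgen : Algebra.adjoin K (Set.range e ∪ Set.range a ∪ Set.range b) = ⊤) (i : ZMod m) :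
    a i * b i + b i * a i ∈ Subalgebra.center K A := by
  apply central_of hgen
  · intro j
    exact (h.comm_e_x i j).add_right (h.comm_e_y i j)
  · intro j
    show _ = _
    rw [mul_add, add_mul, ← mul_assoc, h.aa, mul_assoc (b i), h.aa, ← mul_assoc,
      h.ab, mul_assoc (a i) (b i), h.ba]
    by_cases hij : i = j
    · subst hij; simp [mul_assoc]
    · simp [hij, Ne.symm hij]
  · intro j
    show _ = _
    rw [mul_add, add_mul, ← mul_assoc, h.ba j i, mul_assoc (b i), h.ab i j, ← mul_assoc, h.bb,
      mul_assoc (a i) (b i), h.bb]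
    by_cases hij : i = j
    · subst hij; simp [mul_assoc]
    · simp [hij, Ne.symm hij]

theorem xN_central (h : LR N e a b) (hN : 1 < N)
    (hgen : Algebra.adjoin K (Set.range e ∪ Set.range a ∪ Set.range b) = ⊤) (i : ZMod m) :
    (a i * b i) ^ N ∈ Subalgebra.center K A := by
  apply central_of hgen
  · intro j
    exact (h.comm_e_x i j).pow_right N
  · intro j
    show _ = _
    rw [h.a_xN hN, h.xN_a hN]
  · intro j
    show _ = _
    rw [h.b_xN hN, h.xN_b hN]

/-- spanning set -/
def S (e a b : ZMod m → A) : Set A :=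
  {w | ∃ i s, w = (a i * b i) ^ s * e i ∨ w = (a i * b i) ^ s * a i ∨
    w = (b i * a i) ^ s * e (i + 1) ∨ w = (b i * a i) ^ s * b i}

theorem span_mul (V : Submodule K A) (T : Set A) (g : A) (hT : ∀ w ∈ T, w * g ∈ V) :
    ∀ w ∈ Submodule.span K T, w * g ∈ V := by
  intro w hw
  induction hw using Submodule.span_induction with
  | mem x hx => exact hT x hx
  | zero => simp
  | add x y _ _ hx hy => rw [add_mul]; exact V.add_mem hx hy
  | smul r x _ hx => rw [smul_mul_assoc]; exact V.smul_mem r hx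

theorem span_top (h : LR N e a b)
    (hgen : Algebra.adjoin K (Set.range e ∪ Set.range a ∪ Set.range b) = ⊤) (z : A) :
    z ∈ Submodule.span K (S e a b) := by
  have key : ∀ w ∈ Submodule.span K (S e a b), w * z ∈ Submodule.span K (S e a b) := by
    have hz : z ∈ Algebra.adjoin K (Set.range e ∪ Set.range a ∪ Set.range b) := by simp [hgen]
    have h1 : ∀ i s, (a i * b i) ^ s * e i ∈ Submodule.span K (S e a b) := fun i s =>
      Submodule.subset_span ⟨i, s, Or.inl rfl⟩
    have h2 : ∀ i s, (a i * b i) ^ s * a i ∈ Submodule.span K (S e a b) := fun i s =>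
      Submodule.subset_span ⟨i, s, Or.inr (Or.inl rfl)⟩
    have h3 : ∀ i s, (b i * a i) ^ s * e (i+1) ∈ Submodule.span K (S e a b) := fun i s =>
      Submodule.subset_span ⟨i, s, Or.inr (Or.inr (Or.inl rfl))⟩
    have h4 : ∀ i s, (b i * a i) ^ s * b i ∈ Submodule.span K (S e a b) := fun i s =>
      Submodule.subset_span ⟨i, s, Or.inr (Or.inr (Or.inr rfl))⟩
    induction hz using Algebra.adjoin_induction with
    | mem x hx =>
      rcases hx with (⟨j, rfl⟩ | ⟨j, rfl⟩) | ⟨j, rfl⟩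
      · apply span_mul
        rintro w ⟨i, s, rfl | rfl | rfl | rfl⟩
        · rw [mul_assoc, h.ee]; split_ifs; exacts [h1 i s, by simp]
        · rw [mul_assoc, h.ae]; split_ifs; exacts [h2 i s, by simp]
        · rw [mul_assoc, h.ee]; split_ifs; exacts [h3 i s, by simp]
        · rw [mul_assoc, h.be]; split_ifs; exacts [h4 i s, by simp]
      · apply span_mul
        rintro w ⟨i, s, rfl | rfl | rfl | rfl⟩
        · rw [mul_assoc, h.ea]
          split_ifs with hij
          · rw [← hij]; exact h2 i s
          · simp
        · rw [mul_assoc, h.aa]; simp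
        · rw [mul_assoc, h.ea]
          split_ifs with hij
          · cases s with
            | zero => simpa using h2 j 0
            | succ s => rw [pow_succ, mul_assoc, mul_assoc (b i), h.aa]; simp
          · simp
        · rw [mul_assoc, h.ba i j]
          split_ifs with hij
          · rw [← pow_succ, show (b i * a i) ^ (s+1) = (b i * a i) ^ (s+1) * e (i+1) by
              rw [pow_succ, mul_assoc, h.y_e]; simp]
            exact h3 i (s+1)
          · simp
      · apply span_mul
        rintro w ⟨i, s, rfl | rfl | rfl | rfl⟩
        · rw [mul_assoc, h.eb]
          split_ifs with hij
          · cases s with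
            | zero => simpa using h4 j 0
            | succ s => rw [pow_succ, mul_assoc, mul_assoc (a i), h.bb]; simp
          · simp
        · rw [mul_assoc, h.ab i j]
          split_ifs with hij
          · rw [← pow_succ, show (a i * b i) ^ (s+1) = (a i * b i) ^ (s+1) * e i by
              rw [pow_succ, mul_assoc, h.x_e]; simp]
            exact h1 i (s+1)
          · simp
        · rw [mul_assoc, h.eb]
          split_ifs with hij
          · rw [← add_right_cancel hij]; exact h4 i s
          · simp
        · rw [mul_assoc, h.bb]; simp
    | algebraMap r =>
      intro w hw
      rw [← Algebra.commutes, ← Algebra.smul_def]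
      exact Submodule.smul_mem _ _ hw
    | add x y _ _ hx hy => intro w hw; rw [mul_add]; exact Submodule.add_mem _ (hx w hw) (hy w hw)
    | mul x y _ _ hx hy => intro w hw; rw [← mul_assoc]; exact hy _ (hx w hw)
  have h1 : (1 : A) ∈ Submodule.span K (S e a b) := by
    rw [← h.sum_e]
    refine Submodule.sum_mem _ fun i _ => Submodule.subset_span ⟨i, 0, Or.inl ?_⟩
    simp
  simpa using key 1 h1

open Polynomial

theorem exists_poly (h : LR N e a b) (hm : 2 ≤ m)
    (hgen : Algebra.adjoin K (Set.range e ∪ Set.range a ∪ Set.range b) = ⊤) (z : A) (i : ZMod m) :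
    ∃ p q : K[X], e (i+1) * z * e (i+1) =
      aeval (a (i+1) * b (i+1)) p * e (i+1) + aeval (b i * a i) q * e (i+1) := by
  have hz := h.span_top hgen z
  induction hz using Submodule.span_induction with
  | zero => exact ⟨0, 0, by simp⟩
  | add x y _ _ hx hy =>
    obtain ⟨p, q, h1⟩ := hx
    obtain ⟨p', q', h2⟩ := hy
    refine ⟨p + p', q + q', ?_⟩
    rw [mul_add, add_mul, h1, h2, map_add, map_add, add_mul, add_mul]; abel
  | smul r x _ hx =>
    obtain ⟨p, q, h1⟩ := hx
    refine ⟨r • p, r • q, ?_⟩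
    rw [mul_smul_comm, smul_mul_assoc, h1, map_smul, map_smul, smul_add, smul_mul_assoc,
      smul_mul_assoc]
  | mem x hx =>
    obtain ⟨j, s, rfl | rfl | rfl | rfl⟩ := hx
    · rw [← mul_assoc, ((h.comm_e_x j (i+1)).pow_right s).eq, mul_assoc _ (e (i+1)) (e j), h.ee]
      split_ifs with hij
      · refine ⟨X ^ s, 0, ?_⟩
        rw [mul_assoc, h.idem]; simp [hij]
      · exact ⟨0, 0, by simp⟩
    · refine ⟨0, 0, ?_⟩
      rw [← mul_assoc, ((h.comm_e_x j (i+1)).pow_right s).eq, mul_assoc _ (e (i+1)) (a j), h.ea]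
      split_ifs with hij
      · rw [mul_assoc, h.ae, ← hij, if_neg (ne_succ hm _)]; simp
      · simp
    · rw [← mul_assoc, ((h.comm_e_y j (i+1)).pow_right s).eq, mul_assoc _ (e (i+1)) (e _), h.ee]
      split_ifs with hij
      · refine ⟨0, X ^ s, ?_⟩
        rw [mul_assoc, h.idem]; simp [add_right_cancel hij]
      · exact ⟨0, 0, by simp⟩
    · refine ⟨0, 0, ?_⟩
      rw [← mul_assoc, ((h.comm_e_y j (i+1)).pow_right s).eq, mul_assoc _ (e (i+1)) (b j), h.eb]
      split_ifs with hij
      · rw [mul_assoc, h.be, hij, if_neg (ne_succ hm _).symm]; simp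
      · simp

/-- normalized with explicit constants -/
theorem exists_poly' (h : LR N e a b) (hm : 2 ≤ m)
    (hgen : Algebra.adjoin K (Set.range e ∪ Set.range a ∪ Set.range b) = ⊤) (z : A) (i : ZMod m) :
    ∃ (c : K) (p q : K[X]), e (i+1) * z * e (i+1) =
      c • e (i+1) + aeval (a (i+1) * b (i+1)) p * (a (i+1) * b (i+1))
        + aeval (b i * a i) q * (b i * a i) := by
  obtain ⟨p, q, hpq⟩ := h.exists_poly hm hgen z i
  refine ⟨p.coeff 0 + q.coeff 0, p.divX, q.divX, ?_⟩
  rw [hpq]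
  conv_lhs => rw [← divX_mul_X_add p, ← divX_mul_X_add q]
  simp only [map_add, map_mul, aeval_X, aeval_C, add_mul, mul_assoc _ _ (e _)]
  rw [← mul_assoc (a _), h.x_e, ← mul_assoc (b _), h.y_e]
  simp only [if_true, Algebra.smul_def, map_add, add_mul]
  abel

theorem aeval_mul_left_zero {x y : A} (hxy : x * y = 0) (q : K[X]) :
    aeval x q * y = q.coeff 0 • y := by
  conv_lhs => rw [← divX_mul_X_add q]
  simp [add_mul, mul_assoc, hxy, Algebra.smul_def]

theorem dvd_of {x : A} (hN0 : x ^ N ≠ 0) (hN1 : x ^ N * x = 0) (r : K[X])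
    (hr : aeval x r * x = 0) : X ^ N ∣ r := by
  rw [X_pow_dvd_iff]
  intro d
  induction d using Nat.strong_induction_on with
  | _ d ih =>
    intro hd
    obtain ⟨r', rfl⟩ : X ^ d ∣ r := X_pow_dvd_iff.mpr fun k hk => ih k hk (hk.trans hd)
    have h1 : aeval x r' * x ^ N = 0 := by
      have e1 : aeval x r' * x ^ N = aeval x (X ^ d * r') * x * x ^ (N - 1 - d) := by
        obtain ⟨k, rfl⟩ : ∃ k, N = d + 1 + k := ⟨N - 1 - d, by omega⟩
        rw [show d + 1 + k - 1 - d = k by omega, mul_comm (X ^ d), map_mul, map_pow, aeval_X]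
        simp only [pow_add, pow_one, mul_assoc]
      rw [e1, hr, zero_mul]
    rw [← divX_mul_X_add r'] at h1
    simp only [map_add, map_mul, aeval_X, aeval_C, add_mul, mul_assoc] at h1
    rw [← pow_succ', pow_succ, hN1, mul_zero, zero_add, ← Algebra.smul_def, smul_eq_zero] at h1
    have := h1.resolve_right hN0
    simpa [coeff_X_pow_mul'] using this


theorem aeval_f (h : LR N e a b) (i : ZMod m) (q : K[X]) :
    aeval (a i * b i + b i * a i) q * (a i * b i + b i * a i) =
      aeval (a i * b i) q * (a i * b i) + aeval (b i * a i) q * (b i * a i) := by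
  induction q using Polynomial.induction_on' with
  | add p q hp hq => rw [map_add, map_add, map_add, add_mul, hp, hq, add_mul, add_mul]; abel
  | monomial n c =>
    simp only [aeval_monomial, mul_assoc _ (_ ^ n) _, ← pow_succ]
    rw [h.f_pow, mul_add]

theorem a_aeval (i : ZMod m) (q : K[X]) :
    a i * aeval (b i * a i) q = aeval (a i * b i) q * a i := by
  induction q using Polynomial.induction_on' with
  | add p q hp hq => rw [map_add, map_add, mul_add, add_mul, hp, hq]
  | monomial n c =>
    simp only [aeval_monomial]
    rw [← mul_assoc, ← Algebra.commutes, mul_assoc, mul_assoc]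
    congr 1
    induction n with
    | zero => simp
    | succ n ih => rw [pow_succ, ← mul_assoc, ih, pow_succ]; simp only [mul_assoc]

theorem const_of {α : Type} (c : ZMod m → α) (hc : ∀ i, c i = c (i + 1)) (i : ZMod m) :
    c i = c 0 := by
  rw [← ZMod.natCast_zmod_val i]
  induction i.val with
  | zero => simp
  | succ n ih => rw [Nat.cast_succ, ← hc, ih]

theorem aeval_comm (x : A) (q : K[X]) : aeval x q * x = x * aeval x q := by
  conv_lhs => rw [← aeval_X (R := K) x, aeval_X]
  have := congrArg (aeval x) (mul_comm q X)
  simpa using this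

theorem central_mem (h : LR N e a b) (hm : 2 ≤ m) (hN : 1 < N)
    (hgen : Algebra.adjoin K (Set.range e ∪ Set.range a ∪ Set.range b) = ⊤)
    (hne : ∀ i, (a i * b i) ^ N ≠ 0) (z : A) (hz : z ∈ Subalgebra.center K A)
    (B : Subalgebra K A) (hB1 : ∀ i, (a i * b i) ^ N ∈ B)
    (hB2 : ∀ i, a i * b i + b i * a i ∈ B) : z ∈ B := by
  rw [Subalgebra.mem_center_iff] at hz
  choose c p q hcpq using h.exists_poly' hm hgen z
  have hN1 : ∀ i, (a i * b i) ^ N * (a i * b i) = 0 := fun i => by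
    rw [← mul_assoc, h.xN_a hN, zero_mul]
  have hdvd : ∀ i, X ^ N ∣ C (c i - c (i + 1)) + (p i - q (i + 1)) * X := by
    intro i
    apply dvd_of (hne (i + 1)) (hN1 (i + 1))
    have e1 : z * a (i + 1) =
        c i • a (i + 1) + aeval (a (i+1) * b (i+1)) (p i) * (a (i+1) * b (i+1)) * a (i+1) := by
      have : e (i+1) * z * e (i+1) * a (i+1) = z * a (i+1) := by
        rw [mul_assoc, h.src_a, hz, mul_assoc, h.src_a]
      rw [← this, hcpq, add_mul, add_mul, smul_mul_assoc, h.src_a]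
      rw [mul_assoc _ (b i * a i), mul_assoc (b i), h.aa]
      simp
    have e2 : a (i + 1) * z = c (i + 1) • a (i + 1) +
        aeval (a (i+1) * b (i+1)) (q (i+1)) * (a (i+1) * b (i+1)) * a (i+1) := by
      have : a (i+1) * (e (i+1+1) * z * e (i+1+1)) = a (i+1) * z := by
        rw [mul_assoc, ← hz, ← mul_assoc, ← mul_assoc, h.tgt_a, h.tgt_a]
      rw [← this, hcpq, mul_add, mul_add, mul_smul_comm, h.tgt_a, ← mul_assoc _ _ (b _ * a _),
        a_aeval, aeval_comm, ← mul_assoc (a (i+1)) (a (i+1+1) * _), ← mul_assoc (a (i+1)), h.aa]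
      simp [mul_assoc]
    have e3 := hz (a (i+1))
    rw [e1, e2] at e3
    have e4 := congrArg (· * b (i+1)) e3
    simp only [add_mul, smul_mul_assoc, mul_assoc _ (a (i+1)) (b (i+1))] at e4
    simp only [map_add, map_mul, map_sub, aeval_X, aeval_C, add_mul, sub_mul, ← Algebra.smul_def]
    rw [← sub_eq_zero] at e4
    rw [← neg_eq_zero, ← e4]
    abel
  have hc : ∀ i, c i = c (i + 1) := by
    intro i
    have := X_pow_dvd_iff.mp (hdvd i) 0 (by omega)
    simpa [sub_eq_zero] using this
  have hp : ∀ i, ∃ t : K, aeval (a (i+1) * b (i+1)) (p i) * (a (i+1) * b (i+1)) =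
      aeval (a (i+1) * b (i+1)) (q (i+1)) * (a (i+1) * b (i+1)) + t • (a (i+1) * b (i+1)) ^ N := by
    intro i
    obtain ⟨t, ht⟩ := hdvd i
    refine ⟨t.coeff 0, ?_⟩
    rw [hc i, sub_self, C_0, zero_add, mul_comm (X ^ N)] at ht
    have := congrArg (aeval (a (i+1) * b (i+1))) ht
    simp only [map_mul, map_sub, aeval_X, map_pow] at this
    rw [aeval_mul_left_zero (by rw [← pow_succ', pow_succ, hN1]), sub_mul, sub_eq_iff_eq_add] at this
    rw [this, add_comm]
  choose t ht using hp
  have hsum : z = ∑ i, e (i + 1) * z * e (i + 1) := by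
    have h1 : ∑ i, e (i + 1) = 1 := by
      rw [← h.sum_e]
      exact Equiv.sum_comp (Equiv.addRight (1 : ZMod m)) e
    calc z = z * ∑ i, e (i + 1) := by rw [h1, mul_one]
      _ = _ := by
        rw [Finset.mul_sum]
        refine Finset.sum_congr rfl fun i _ => ?_
        rw [hz, mul_assoc, h.idem]
  have hshift : ∑ i, aeval (b i * a i) (q i) * (b i * a i) =
      ∑ i, aeval (b (i+1) * a (i+1)) (q (i+1)) * (b (i+1) * a (i+1)) :=
    (Equiv.sum_comp (Equiv.addRight (1 : ZMod m))
      (fun i => aeval (b i * a i) (q i) * (b i * a i))).symm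
  have hz2 : z = c 0 • (1 : A) + (∑ i, aeval (a (i+1) * b (i+1) + b (i+1) * a (i+1)) (q (i+1)) *
      (a (i+1) * b (i+1) + b (i+1) * a (i+1)) + ∑ i, t i • (a (i+1) * b (i+1)) ^ N) := by
    conv_lhs => rw [hsum]
    simp only [hcpq, h.aeval_f, ht, Finset.sum_add_distrib, const_of c hc, ← Finset.smul_sum]
    rw [hshift, show ∑ i, e (i + 1) = 1 from by
      rw [← h.sum_e]
      exact Equiv.sum_comp (Equiv.addRight (1 : ZMod m)) e]
    abel
  rw [hz2]
  refine B.add_mem (B.smul_mem B.one_mem _) (B.add_mem (B.sum_mem fun i _ => ?_)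
    (B.sum_mem fun i _ => B.smul_mem (hB1 _) _))
  refine B.mul_mem ?_ (hB2 _)
  have := (aeval (⟨_, hB2 (i+1)⟩ : B) (q (i+1))).2
  rwa [← B.coe_val, ← aeval_algHom_apply] at this

end LR

namespace LRep

/-- operator of a partial map -/
noncomputable def T (K : Type) [Field K] (φ : ℤ → Option ℤ) : Module.End K (ℤ →₀ K) :=
  Finsupp.linearCombination K (fun n => (φ n).elim 0 (fun k => Finsupp.single k (1 : K)))

variable {K : Type} [Field K]

theorem T_single (φ : ℤ → Option ℤ) (n : ℤ) : T K φ (Finsupp.single n 1) =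
    (φ n).elim 0 (fun k => Finsupp.single k (1 : K)) := by
  simp [T]

theorem T_mul (φ ψ : ℤ → Option ℤ) : T K φ * T K ψ = T K (fun n => (ψ n).bind φ) := by
  apply Finsupp.lhom_ext'
  intro n
  apply LinearMap.ext_ring
  show T K φ (T K ψ (Finsupp.single n 1)) = T K _ (Finsupp.single n 1)
  rw [T_single, T_single]
  cases h : ψ n with
  | none => simp
  | some k => simp [T_single]

theorem T_zero (φ : ℤ → Option ℤ) (h : ∀ n, φ n = none) : T K φ = 0 := by
  apply Finsupp.lhom_ext'
  intro n
  apply LinearMap.ext_ring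
  show T K φ (Finsupp.single n 1) = 0
  rw [T_single, h]; rfl

theorem T_pow (φ : ℤ → Option ℤ) (ψ : ℕ → ℤ → Option ℤ) (h0 : ∀ n, ψ 0 n = φ n)
    (h1 : ∀ k n, ψ (k + 1) n = (φ n).bind (ψ k)) (k : ℕ) : T K φ ^ (k + 1) = T K (ψ k) := by
  induction k with
  | zero => rw [zero_add, pow_one]; congr 1; funext n; rw [h0]
  | succ k ih => rw [pow_succ, ih, T_mul]; congr 1; funext n; rw [h1]

variable {m : ℕ} [NeZero m]

/-- the vertex of a basis element -/
def vert (i : ZMod m) (n : ℤ) : ZMod m :=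
  if n % 2 = 0 then i else if 0 < n then i + 1 else i - 1

/-- idempotents -/
def Fe (i j : ZMod m) (n : ℤ) : Option ℤ := if vert i n = j then some n else none

/-- arrows a -/
def Fa (N : ℕ) (i j : ZMod m) (n : ℤ) : Option ℤ :=
  if j = i ∧ n % 2 = 1 ∧ 0 < n ∧ n < 2 * N then some (n + 1)
  else if j + 1 = i ∧ n % 2 = 0 ∧ -(2 * N) < n ∧ n ≤ 0 then some (n - 1) else none

/-- arrows b -/
def Fb (N : ℕ) (i j : ZMod m) (n : ℤ) : Option ℤ :=
  if j = i ∧ n % 2 = 0 ∧ 0 ≤ n ∧ n < 2 * N then some (n + 1)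
  else if j + 1 = i ∧ n % 2 = 1 ∧ -(2 * N) < n ∧ n < 0 then
    some (if n = -(2 * N) + 1 then 2 * N else n - 1) else none

theorem Xi (hm : 2 ≤ m) (N : ℕ) (i : ZMod m) (n : ℤ) : (Fb N i i n).bind (Fa N i i) =
    if n % 2 = 0 ∧ 0 ≤ n ∧ n + 2 ≤ 2 * N then some (n + 2) else none := by
  have h1 := LR.ne_succ hm i
  simp only [Fb, Fa, h1, true_and, false_and, if_false]
  split_ifs <;> simp <;> grind [Fa, Fb, Fe, vert]

theorem Yi (hm : 2 ≤ m) (N : ℕ) (i : ZMod m) (n : ℤ) : (Fa N i i n).bind (Fb N i i) =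
    if n % 2 = 1 ∧ 0 ≤ n ∧ n + 1 < 2 * N then some (n + 2) else none := by
  have h1 := LR.ne_succ hm i
  simp only [Fb, Fa, h1, true_and, false_and, if_false]
  split_ifs <;> simp <;> grind [Fa, Fb, Fe, vert]

theorem Xi' (hm : 2 ≤ m) (N : ℕ) (j : ZMod m) (n : ℤ) :
    (Fb N (j + 1) j n).bind (Fa N (j + 1) j) =
    if n % 2 = 1 ∧ n < 0 ∧ n - 1 > - (2 * N) then some (n - 2) else none := by
  have h1 := (LR.ne_succ hm j).symm
  simp only [Fb, Fa, h1, true_and, false_and, if_false]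
  split_ifs <;> simp <;> grind [Fa, Fb, Fe, vert]

theorem Yi' (hm : 2 ≤ m) (N : ℕ) (j : ZMod m) (n : ℤ) :
    (Fa N (j + 1) j n).bind (Fb N (j + 1) j) =
    if n % 2 = 0 ∧ n ≤ 0 ∧ n - 2 ≥ - (2 * N) then
      some (if n - 2 = - (2 * N) then 2 * (N : ℤ) else n - 2) else none := by
  have h1 := (LR.ne_succ hm j).symm
  simp only [Fb, Fa, h1, true_and, false_and, if_false]
  split_ifs <;> simp <;> grind [Fa, Fb, Fe, vert]

theorem XiN (hm : 2 ≤ m) (N : ℕ) (hN : 1 < N) (i : ZMod m) :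
    (T K (Fa N i i) * T K (Fb N i i)) ^ N = T K (fun n => if n = 0 then some (2 * N : ℤ) else none) := by
  obtain ⟨M, rfl⟩ : ∃ M, N = M + 1 := ⟨N - 1, by omega⟩
  rw [T_mul, T_pow _ (fun k n => if n % 2 = 0 ∧ 0 ≤ n ∧ n + 2 * k + 2 ≤ 2 * (M + 1 : ℕ) then
    some (n + 2 * k + 2) else none)]
  · congr 1; funext n
    split_ifs <;> first | rfl | omega | (congr 1; omega)
  · intro n; rw [Xi hm]; simp
  · intro k n; rw [Xi hm]
    split_ifs <;> simp only [Option.bind_some, Option.bind_none] <;> (try split_ifs) <;>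
      first | rfl | omega | (congr 1; omega)

theorem YiN' (hm : 2 ≤ m) (N : ℕ) (hN : 1 < N) (j : ZMod m) :
    (T K (Fb N (j+1) j) * T K (Fa N (j+1) j)) ^ N =
      T K (fun n => if n = 0 then some (2 * N : ℤ) else none) := by
  obtain ⟨M, rfl⟩ : ∃ M, N = M + 1 := ⟨N - 1, by omega⟩
  rw [T_mul, T_pow _ (fun k n => if n % 2 = 0 ∧ n ≤ 0 ∧ n - 2 * k - 2 ≥ - (2 * (M + 1 : ℕ)) then
    some (if n - 2 * k - 2 = - (2 * (M + 1 : ℕ)) then 2 * (M + 1 : ℕ) else n - 2 * k - 2) else none)]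
  · congr 1; funext n
    split_ifs <;> first | rfl | omega | (congr 1; omega)
  · intro n; rw [Yi' hm]; simp
  · intro k n; rw [Yi' hm]
    split_ifs <;> simp only [Option.bind_some, Option.bind_none] <;> (try split_ifs) <;>
      first | rfl | omega | (congr 1; omega)

theorem XN (hm : 2 ≤ m) (N : ℕ) (hN : 1 < N) (i j : ZMod m) (hij : j ≠ i) :
    (T K (Fa N i j) * T K (Fb N i j)) ^ N = 0 := by
  by_cases h : j + 1 = i
  · subst h
    obtain ⟨M, rfl⟩ : ∃ M, N = M + 1 := ⟨N - 1, by omega⟩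
    rw [T_mul, T_pow _ (fun k n => if n % 2 = 1 ∧ n < 0 ∧ n - 2 * k - 1 > - (2 * (M + 1 : ℕ)) then
      some (n - 2 * k - 2) else none)]
    · apply T_zero; intro n; rw [if_neg]; omega
    · intro n; rw [Xi' hm]; simp
    · intro k n; rw [Xi' hm]
      split_ifs <;> simp only [Option.bind_some, Option.bind_none] <;> (try split_ifs) <;>
      first | rfl | omega | (congr 1; omega)
  · rw [T_zero (Fa N i j) (by simp [Fa, hij, h]), zero_mul, zero_pow (by omega)]

theorem YN (hm : 2 ≤ m) (N : ℕ) (hN : 1 < N) (i j : ZMod m) (hij : j + 1 ≠ i) :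
    (T K (Fb N i j) * T K (Fa N i j)) ^ N = 0 := by
  by_cases h : j = i
  · subst h
    obtain ⟨M, rfl⟩ : ∃ M, N = M + 1 := ⟨N - 1, by omega⟩
    rw [T_mul, T_pow _ (fun k n => if n % 2 = 1 ∧ 0 ≤ n ∧ n + 2 * k + 1 < 2 * (M + 1 : ℕ) then
      some (n + 2 * k + 2) else none)]
    · apply T_zero; intro n; rw [if_neg]; omega
    · intro n; rw [Yi hm]; simp
    · intro k n; rw [Yi hm]
      split_ifs <;> simp only [Option.bind_some, Option.bind_none] <;> (try split_ifs) <;>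
      first | rfl | omega | (congr 1; omega)
  · rw [T_zero (Fa N i j) (by simp [Fa, hij, h]), mul_zero, zero_pow (by omega)]

theorem rep (hm : 2 ≤ m) (N : ℕ) (hN : 1 < N) (i : ZMod m) :
    LR N (fun j => T K (Fe i j)) (fun j => T K (Fa N i j)) (fun j => T K (Fb N i j)) where
  idem j := by
    rw [T_mul]; congr 1; funext n; simp only [Fe]; split_ifs <;> simp <;> grind [Fe]
  orth j k hjk := by
    rw [T_mul]; apply T_zero; intro n; simp only [Fe]; split_ifs <;> simp <;> grind [Fe]
  sum_e := by
    apply Finsupp.lhom_ext'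
    intro n
    apply LinearMap.ext_ring
    show (∑ j, T K (Fe i j)) (Finsupp.single n 1) = Finsupp.single n 1
    rw [LinearMap.sum_apply, Finset.sum_eq_single (vert i n)]
    · simp [T_single, Fe]
    · intro j _ hj; simp [T_single, Fe, hj.symm]
    · simp
  src_a j := by
    rw [T_mul]; congr 1; funext n; simp only [Fa, Fe, vert]; split_ifs <;> simp <;> grind [Fa, Fb, Fe, vert]
  tgt_a j := by
    rw [T_mul]; congr 1; funext n; simp only [Fa, Fe, vert]; split_ifs <;> simp <;> grind [Fa, Fb, Fe, vert]
  src_b j := by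
    rw [T_mul]; congr 1; funext n; simp only [Fb, Fe, vert]; split_ifs <;> simp <;> grind [Fa, Fb, Fe, vert]
  tgt_b j := by
    rw [T_mul]; congr 1; funext n; simp only [Fb, Fe, vert]; split_ifs <;> simp <;> grind [Fa, Fb, Fe, vert]
  zero_aa j := by
    rw [T_mul]; apply T_zero; intro n; simp only [Fa]; split_ifs <;> simp <;> grind [Fa, Fb, Fe, vert]
  zero_bb j := by
    rw [T_mul]; apply T_zero; intro n; simp only [Fb]; split_ifs <;> simp <;> grind [Fa, Fb, Fe, vert]
  comm j := by
    by_cases h : j = i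
    · subst h
      have := YiN' (K := K) hm N hN (j - 1)
      rw [sub_add_cancel] at this
      rw [this, XiN hm N hN]
    · rw [XN hm N hN i j h, YN hm N hN i (j-1) (by simpa using h)]

theorem ne (hm : 2 ≤ m) (N : ℕ) (hN : 1 < N) (i : ZMod m) :
    (T K (Fa N i i) * T K (Fb N i i)) ^ N ≠ 0 := by
  rw [XiN hm N hN]
  intro h
  have := congrArg (fun g => g (Finsupp.single 0 1)) h
  simp [T_single] at this

end LRep
end Aux

theorem lam_LR : LR N (e K m N) (a K m N) (ab K m N) where
  idem i := by
    simpa [e, a, ab] using RingQuot.mkAlgHom_rel K (LamRel.idem (K := K) (N := N) i)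
  orth i j h := by
    simpa [e, a, ab] using RingQuot.mkAlgHom_rel K (LamRel.orth (K := K) (N := N) i j h)
  sum_e := by
    simpa [e, a, ab] using RingQuot.mkAlgHom_rel K (LamRel.sum_e (K := K) (m := m) (N := N))
  src_a i := by
    simpa [e, a, ab] using RingQuot.mkAlgHom_rel K (LamRel.src_a (K := K) (N := N) i)
  tgt_a i := by
    simpa [e, a, ab] using RingQuot.mkAlgHom_rel K (LamRel.tgt_a (K := K) (N := N) i)
  src_b i := by
    simpa [e, a, ab] using RingQuot.mkAlgHom_rel K (LamRel.src_ab (K := K) (N := N) i)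
  tgt_b i := by
    simpa [e, a, ab] using RingQuot.mkAlgHom_rel K (LamRel.tgt_ab (K := K) (N := N) i)
  zero_aa i := by
    simpa [e, a, ab] using RingQuot.mkAlgHom_rel K (LamRel.zero_aa (K := K) (N := N) i)
  zero_bb i := by
    simpa [e, a, ab] using RingQuot.mkAlgHom_rel K (LamRel.zero_abab (K := K) (N := N) i)
  comm i := by
    simpa [e, a, ab] using RingQuot.mkAlgHom_rel K (LamRel.comm (K := K) (N := N) i)

theorem lam_gen : Algebra.adjoin K
    (Set.range (e K m N) ∪ Set.range (a K m N) ∪ Set.range (ab K m N)) = ⊤ := by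
  rw [eq_top_iff]
  intro z _
  obtain ⟨w, rfl⟩ := RingQuot.mkAlgHom_surjective K (LamRel K m N) z
  induction w using FreeAlgebra.induction with
  | grade0 r => rw [AlgHom.commutes]; exact Subalgebra.algebraMap_mem _ r
  | grade1 x =>
    apply Algebra.subset_adjoin
    cases x with
    | e i => exact Or.inl (Or.inl ⟨i, rfl⟩)
    | a i => exact Or.inl (Or.inr ⟨i, rfl⟩)
    | abar i => exact Or.inr ⟨i, rfl⟩
  | mul x y hx hy => rw [map_mul]; exact Subalgebra.mul_mem _ (hx trivial) (hy trivial)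
  | add x y hx hy => rw [map_add]; exact Subalgebra.add_mem _ (hx trivial) (hy trivial)

theorem lam_ne (hm : 2 ≤ m) (hN : 1 < N) (i : ZMod m) :
    (a K m N i * ab K m N i) ^ N ≠ 0 := by
  have R := LRep.rep (K := K) hm N hN i
  let g : Gen m → Module.End K (ℤ →₀ K) := fun x => match x with
    | .e j => LRep.T K (LRep.Fe i j)
    | .a j => LRep.T K (LRep.Fa N i j)
    | .abar j => LRep.T K (LRep.Fb N i j)
  have hE : ∀ j, FreeAlgebra.lift K g (Efree K m j) = LRep.T K (LRep.Fe i j) := fun j => by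
    simp [Efree, g]
  have hA : ∀ j, FreeAlgebra.lift K g (Afree K m j) = LRep.T K (LRep.Fa N i j) := fun j => by
    simp [Afree, g]
  have hB : ∀ j, FreeAlgebra.lift K g (ABfree K m j) = LRep.T K (LRep.Fb N i j) := fun j => by
    simp [ABfree, g]
  have hrel : ∀ ⦃x y⦄, LamRel K m N x y → FreeAlgebra.lift K g x = FreeAlgebra.lift K g y := by
    intro x y hxy
    cases hxy with
    | idem j => simpa only [map_mul, hE] using R.idem j
    | orth j k h => simpa only [map_mul, map_zero, hE] using R.orth j k h
    | sum_e => simpa only [map_sum, map_one, hE] using R.sum_e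
    | src_a j => simpa only [map_mul, hE, hA] using R.src_a j
    | tgt_a j => simpa only [map_mul, hE, hA] using R.tgt_a j
    | src_ab j => simpa only [map_mul, hE, hB] using R.src_b j
    | tgt_ab j => simpa only [map_mul, hE, hB] using R.tgt_b j
    | zero_aa j => simpa only [map_mul, map_zero, hA] using R.zero_aa j
    | zero_abab j => simpa only [map_mul, map_zero, hB] using R.zero_bb j
    | comm j => simpa only [map_mul, map_pow, hA, hB] using R.comm j
  intro h0
  have h1 := congrArg (RingQuot.liftAlgHom K ⟨FreeAlgebra.lift K g, hrel⟩) h0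
  rw [map_pow, map_mul, map_zero, a, ab, RingQuot.liftAlgHom_mkAlgHom_apply,
    RingQuot.liftAlgHom_mkAlgHom_apply, hA, hB] at h1
  exact LRep.ne hm N hN i h1

theorem stmt4 (hm : 2 ≤ m) (hN : 1 < N) :
    (∀ i : ZMod m, ∀ s : ℕ, 1 ≤ s → s ≤ N - 1 →
      f K m N i ^ s = (a K m N i * ab K m N i) ^ s + (ab K m N i * a K m N i) ^ s) ∧
    (∀ i : ZMod m,
      f K m N i ^ N = (a K m N i * ab K m N i) ^ N + (ab K m N i * a K m N i) ^ N) ∧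
    Algebra.adjoin K
        ({1} ∪ (Set.range fun i : ZMod m => (a K m N i * ab K m N i) ^ N) ∪
          Set.range (f K m N)) =
      Subalgebra.center K (Lam K m N) := by
  have h := lam_LR K m N
  have hg := lam_gen K m N
  refine ⟨?_, ?_, ?_⟩
  · intro i s hs _
    obtain ⟨n, rfl⟩ : ∃ n, s = n + 1 := ⟨s - 1, by omega⟩
    exact h.f_pow i n
  · intro i
    have := h.f_pow i (N - 1)
    rwa [show N - 1 + 1 = N by omega] at this
  · apply le_antisymm
    · rw [Algebra.adjoin_le_iff]
      rintro x ((rfl | ⟨i, rfl⟩) | ⟨i, rfl⟩)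
      · exact Subalgebra.one_mem _
      · exact h.xN_central hN hg i
      · exact h.f_central hg i
    · intro z hz
      refine h.central_mem hm hN hg (lam_ne K m N hm hN) z hz _ (fun i => ?_) (fun i => ?_)
      · exact Algebra.subset_adjoin (Or.inl (Or.inr ⟨i, rfl⟩))
      · exact Algebra.subset_adjoin (Or.inr ⟨i, rfl⟩)
end

section
/- Let K be a field, m ≥ 2, N ≥ 1, and Λ_N the algebra above. Then for any two vertices i, j: dim_K e_i Λ_N e_j = 2N if i = j; dim_K e_i Λ_N e_j = N if i − j ≡ ±1 (mod m) and m ≥ 3; and e_i Λ_N e_j = 0 otherwise (for m ≥ 3). In particular dim_K Λ_N = 4Nm for m ≥ 3. -/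
variable (K : Type) [Field K] (m N : ℕ) [NeZero m]

/-- The corner space `e_i Λ_N e_j`, as the range of `x ↦ e_i * x * e_j`. -/
def corner (i j : ZMod m) : Submodule K (Lam K m N) :=
  LinearMap.range
    ((LinearMap.mulLeft K (e K m N i)).comp (LinearMap.mulRight K (e K m N j)))

namespace LamAux

/-- Alternating path of length `k` starting at `i`, first arrow of type `a` iff the flag is true. -/
noncomputable def P : ℕ → Bool → ZMod m → Lam K m N
  | 0, _, i => e K m N i
  | k + 1, true, i => a K m N i * P k false (i + 1)
  | k + 1, false, i => ab K m N (i - 1) * P k true (i - 1)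

lemma rel {x y : FreeAlgebra K (Gen m)} (h : LamRel K m N x y) :
    RingQuot.mkAlgHom K (LamRel K m N) x = RingQuot.mkAlgHom K (LamRel K m N) y :=
  RingQuot.mkAlgHom_rel K h

lemma ee (i : ZMod m) : e K m N i * e K m N i = e K m N i := by
  simpa [e] using rel K m N (LamRel.idem i)
lemma eo (i j : ZMod m) (h : i ≠ j) : e K m N i * e K m N j = 0 := by
  simpa [e] using rel K m N (LamRel.orth i j h)
lemma se : ∑ i : ZMod m, e K m N i = 1 := by
  simpa [e] using rel K m N (LamRel.sum_e)
lemma ea (i : ZMod m) : e K m N i * a K m N i = a K m N i := by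
  simpa [e, a] using rel K m N (LamRel.src_a i)
lemma ae (i : ZMod m) : a K m N i * e K m N (i + 1) = a K m N i := by
  simpa [e, a] using rel K m N (LamRel.tgt_a i)
lemma eb (i : ZMod m) : e K m N (i + 1) * ab K m N i = ab K m N i := by
  simpa [e, ab] using rel K m N (LamRel.src_ab i)
lemma be (i : ZMod m) : ab K m N i * e K m N i = ab K m N i := by
  simpa [e, ab] using rel K m N (LamRel.tgt_ab i)
lemma aa (i : ZMod m) : a K m N i * a K m N (i + 1) = 0 := by
  simpa [a] using rel K m N (LamRel.zero_aa i)
lemma bb (i : ZMod m) : ab K m N i * ab K m N (i - 1) = 0 := by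
  simpa [ab] using rel K m N (LamRel.zero_abab i)
lemma cc (i : ZMod m) : (a K m N i * ab K m N i) ^ N
    = (ab K m N (i - 1) * a K m N (i - 1)) ^ N := by
  simpa [a, ab] using rel K m N (LamRel.comm i)

lemma eP (k : ℕ) (d : Bool) (i : ZMod m) : e K m N i * P K m N k d i = P K m N k d i := by
  cases k with
  | zero => simp [P, ee]
  | succ k =>
    cases d
    · have := eb K m N (i - 1)
      rw [sub_add_cancel] at this
      simp only [P]
      rw [← mul_assoc, this]
    · simp only [P]
      rw [← mul_assoc, ea]

lemma eP' (j : ZMod m) (k : ℕ) (d : Bool) (i : ZMod m) (h : j ≠ i) :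
    e K m N j * P K m N k d i = 0 := by
  rw [← eP, ← mul_assoc, eo _ _ _ _ _ h, zero_mul]

lemma aP' (j : ZMod m) (k : ℕ) (d : Bool) (i : ZMod m) (h : i ≠ j + 1) :
    a K m N j * P K m N k d i = 0 := by
  rw [← ae, mul_assoc, eP' _ _ _ _ _ _ _ h.symm, mul_zero]

lemma bP' (j : ZMod m) (k : ℕ) (d : Bool) (i : ZMod m) (h : i ≠ j) :
    ab K m N j * P K m N k d i = 0 := by
  rw [← be, mul_assoc, eP' _ _ _ _ _ _ _ h.symm, mul_zero]

lemma aPt (j : ZMod m) (k : ℕ) : a K m N j * P K m N (k + 1) true (j + 1) = 0 := by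
  simp only [P]
  rw [← mul_assoc, aa, zero_mul]

lemma bPf (j : ZMod m) (k : ℕ) : ab K m N j * P K m N (k + 1) false j = 0 := by
  simp only [P]
  rw [← mul_assoc, bb, zero_mul]

lemma Pt (k : ℕ) (i : ZMod m) :
    P K m N (2 * k) true i = (a K m N i * ab K m N i) ^ k * e K m N i := by
  induction k with
  | zero => simp [P]
  | succ k ih =>
    rw [show 2 * (k + 1) = 2 * k + 1 + 1 by ring]
    simp only [P, add_sub_cancel_right]
    rw [ih, pow_succ', mul_assoc, mul_assoc]

lemma Pf (k : ℕ) (i : ZMod m) :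
    P K m N (2 * k) false i = (ab K m N (i - 1) * a K m N (i - 1)) ^ k * e K m N i := by
  induction k with
  | zero => simp [P]
  | succ k ih =>
    rw [show 2 * (k + 1) = 2 * k + 1 + 1 by ring]
    simp only [P, sub_add_cancel]
    rw [ih, pow_succ', mul_assoc, mul_assoc]

lemma Ptf (i : ZMod m) : P K m N (2 * N) true i = P K m N (2 * N) false i := by
  rw [Pt, Pf, cc]

lemma P_top (hN : 1 ≤ N) (d : Bool) (i : ZMod m) : P K m N (2 * N + 1) d i = 0 := by
  obtain ⟨n, hn⟩ : ∃ n, 2 * N = n + 1 := ⟨2 * N - 1, by omega⟩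
  cases d
  · simp only [P]
    rw [Ptf, hn, bPf]
  · simp only [P]
    rw [← Ptf, hn, aPt]

lemma P_big (hN : 1 ≤ N) (k : ℕ) (hk : 2 * N < k) (d : Bool) (i : ZMod m) :
    P K m N k d i = 0 := by
  obtain ⟨n, rfl⟩ : ∃ n, k = 2 * N + 1 + n := ⟨k - (2 * N + 1), by omega⟩
  clear hk
  induction n generalizing d i with
  | zero => exact P_top K m N hN d i
  | succ n ih =>
    rw [← add_assoc]
    cases d <;> simp only [P] <;> rw [ih, mul_zero]

/-- Basis elements with signed length. -/
noncomputable def X (p : ZMod m × ℤ) : Lam K m N := P K m N p.2.natAbs (decide (0 ≤ p.2)) p.1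

def R : Set (ZMod m × ℤ) := {p | -(2 * N : ℤ) < p.2 ∧ p.2 ≤ 2 * N}

lemma P_mem (hN : 1 ≤ N) (k : ℕ) (d : Bool) (i : ZMod m) :
    P K m N k d i ∈ Submodule.span K (X K m N '' R m N) := by
  rcases lt_or_ge (2 * N) k with h | h
  · rw [P_big K m N hN k h]; exact zero_mem _
  · apply Submodule.subset_span
    cases d
    · rcases h.lt_or_eq with h | h
      · rcases Nat.eq_zero_or_pos k with rfl | h0
        · exact ⟨(i, 0), by simp [R]; omega, by simp [X, P]⟩
        · refine ⟨(i, -(k : ℤ)), by simp [R]; omega, ?_⟩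
          have : ¬ (0 : ℤ) ≤ -(k : ℤ) := by omega
          simp [X, h0.ne']
      · rw [h, ← Ptf]
        exact ⟨(i, (2 * N : ℕ)), by simp [R]; omega, by simp [X, Int.natAbs_mul]⟩
    · exact ⟨(i, (k : ℤ)), by simp [R]; omega, by simp [X]⟩

lemma gen_mul (hN : 1 ≤ N) (g : Gen m) (p : ZMod m × ℤ) :
    RingQuot.mkAlgHom K (LamRel K m N) (FreeAlgebra.ι K g) * X K m N p ∈
      Submodule.span K (X K m N '' R m N) := by
  obtain ⟨i, l⟩ := p
  simp only [X]
  generalize l.natAbs = k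
  generalize decide (0 ≤ l) = d
  cases g with
  | e j =>
    change e K m N j * _ ∈ _
    by_cases h : j = i
    · subst h; rw [eP]; exact P_mem K m N hN k d j
    · rw [eP' _ _ _ _ _ _ _ h]; exact zero_mem _
  | a j =>
    change a K m N j * _ ∈ _
    by_cases h : i = j + 1
    · subst h
      cases d
      · exact P_mem K m N hN (k + 1) true j
      · cases k with
        | zero => exact P_mem K m N hN 1 true j
        | succ k => rw [aPt]; exact zero_mem _
    · rw [aP' _ _ _ _ _ _ _ h]; exact zero_mem _
  | abar j =>
    change ab K m N j * _ ∈ _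
    by_cases h : i = j
    · subst h
      cases d
      · cases k with
        | zero => simpa [P] using P_mem K m N hN 1 false (i + 1)
        | succ k => rw [bPf]; exact zero_mem _
      · simpa [P] using P_mem K m N hN (k + 1) false (i + 1)
    · rw [bP' _ _ _ _ _ _ _ h]; exact zero_mem _

lemma mul_mem_span (hN : 1 ≤ N) (x : FreeAlgebra K (Gen m)) (y : Lam K m N)
    (hy : y ∈ Submodule.span K (X K m N '' R m N)) :
    RingQuot.mkAlgHom K (LamRel K m N) x * y ∈ Submodule.span K (X K m N '' R m N) := by
  induction x using FreeAlgebra.induction generalizing y with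
  | grade0 r => 
    rw [AlgHom.commutes, ← Algebra.smul_def]
    exact Submodule.smul_mem _ _ hy
  | grade1 g =>
    induction hy using Submodule.span_induction with
    | mem x hx => obtain ⟨p, -, rfl⟩ := hx; exact gen_mul K m N hN g p
    | zero => rw [mul_zero]; exact zero_mem _
    | add x y _ _ h1 h2 => rw [mul_add]; exact add_mem h1 h2
    | smul c x _ h => rw [mul_smul_comm]; exact Submodule.smul_mem _ _ h
  | mul x z hx hz => rw [map_mul, mul_assoc]; exact hx _ (hz _ hy)
  | add x z hx hz => rw [map_add, add_mul]; exact add_mem (hx _ hy) (hz _ hy)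

lemma span_top (hN : 1 ≤ N) : Submodule.span K (X K m N '' R m N) = ⊤ := by
  rw [eq_top_iff]
  rintro x -
  obtain ⟨y, rfl⟩ := RingQuot.mkAlgHom_surjective K (LamRel K m N) x
  rw [← mul_one (RingQuot.mkAlgHom K (LamRel K m N) y)]
  apply mul_mem_span K m N hN
  rw [← se]
  exact sum_mem fun i _ => P_mem K m N hN 0 true i

/-! The representation. -/

abbrev V : Type := ZMod m × ℤ →₀ K

noncomputable def rE (j : ZMod m) : Module.End K (V K m) :=
  Finsupp.linearCombination K (fun p => if p.1 = j then Finsupp.single p 1 else 0)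
noncomputable def rA (j : ZMod m) : Module.End K (V K m) :=
  Finsupp.linearCombination K (fun p => if p.1 = j + 1 ∧ -(2 * N : ℤ) < p.2 ∧ p.2 ≤ 0 then
    Finsupp.single (j, 1 - p.2) 1 else 0)
noncomputable def rB (j : ZMod m) : Module.End K (V K m) :=
  Finsupp.linearCombination K (fun p => if p.1 = j ∧ 0 ≤ p.2 ∧ p.2 < 2 * N then
    Finsupp.single (j + 1, if p.2 + 1 = 2 * N then 2 * (N : ℤ) else -(p.2 + 1)) 1 else 0)

noncomputable def s (i : ZMod m) (l : ℤ) : V K m := Finsupp.single (i, l) 1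

lemma rE_s (j i : ZMod m) (l : ℤ) : rE K m j (s K m i l) = if i = j then s K m i l else 0 := by
  simp [rE, s]
lemma rA_s (j i : ZMod m) (l : ℤ) : rA K m N j (s K m i l) =
    if i = j + 1 ∧ -(2 * N : ℤ) < l ∧ l ≤ 0 then s K m j (1 - l) else 0 := by
  simp [rA, s]
lemma rB_s (j i : ZMod m) (l : ℤ) : rB K m N j (s K m i l) =
    if i = j ∧ 0 ≤ l ∧ l < 2 * N then
      s K m (j + 1) (if l + 1 = 2 * N then 2 * (N : ℤ) else -(l + 1)) else 0 := by
  simp [rB, s]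

lemma end_ext {f g : Module.End K (V K m)} (h : ∀ i l, f (s K m i l) = g (s K m i l)) : f = g := by
  apply Finsupp.lhom_ext'
  rintro ⟨i, l⟩
  apply LinearMap.ext_ring
  exact h i l

lemma AB_s (hN : 1 ≤ N) (i j : ZMod m) (l : ℤ) : (rA K m N j * rB K m N j) (s K m i l) =
    if i = j ∧ 0 ≤ l ∧ l + 2 ≤ 2 * N then s K m i (l + 2) else 0 := by
  rw [Module.End.mul_apply, rB_s]
  by_cases h : i = j ∧ 0 ≤ l ∧ l < 2 * N
  · rw [if_pos h, rA_s]
    by_cases h2 : l + 1 = 2 * N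
    · rw [if_pos h2, if_neg (by omega), if_neg (by omega)]
    · rw [if_neg h2, if_pos (by constructor; rfl; omega), if_pos (by simp [h.1]; omega), h.1]
      congr 1; ring
  · rw [if_neg h, map_zero, if_neg]
    rintro ⟨h1, h2, h3⟩
    exact h ⟨h1, h2, by omega⟩

lemma BA_s (hN : 1 ≤ N) (i j : ZMod m) (l : ℤ) : (rB K m N j * rA K m N j) (s K m i l) =
    if i = j + 1 ∧ l ≤ 0 ∧ -(2 * N : ℤ) ≤ l - 2 then
      s K m i (if l - 2 = - (2 * N : ℤ) then 2 * (N : ℤ) else l - 2) else 0 := by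
  rw [Module.End.mul_apply, rA_s]
  by_cases h : i = j + 1 ∧ -(2 * N : ℤ) < l ∧ l ≤ 0
  · rw [if_pos h, rB_s]
    by_cases h2 : 1 - l < 2 * N
    · rw [if_pos (by constructor; rfl; omega),
        if_pos (⟨h.1, by omega, by omega⟩ : i = j + 1 ∧ l ≤ 0 ∧ -(2 * N : ℤ) ≤ l - 2), h.1]
      congr 1; split_ifs <;> omega
    · rw [if_neg (by omega), if_neg (by omega)]
  · rw [if_neg h, map_zero, if_neg]
    rintro ⟨h1, h2, h3⟩
    exact h ⟨h1, by omega, by omega⟩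

lemma ABp (hN : 1 ≤ N) (i j : ZMod m) (k : ℕ) (l : ℤ) :
    ((rA K m N j * rB K m N j) ^ (k + 1)) (s K m i l) =
    if i = j ∧ 0 ≤ l ∧ l + 2 * (k + 1) ≤ 2 * N then s K m i (l + 2 * (k + 1)) else 0 := by
  induction k generalizing l with
  | zero => simpa using AB_s K m N hN i j l
  | succ k ih =>
    rw [pow_succ, Module.End.mul_apply, AB_s K m N hN]
    by_cases h : i = j ∧ 0 ≤ l ∧ l + 2 ≤ 2 * N
    · rw [if_pos h, ih]
      have : l + 2 + 2 * ((k : ℤ) + 1) = l + 2 * (((k + 1 : ℕ) : ℤ) + 1) := by push_cast; ring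
      rw [this]
      congr 1
      simp only [eq_iff_iff]
      constructor
      · rintro ⟨h1, h2, h3⟩; exact ⟨h1, by omega, h3⟩
      · rintro ⟨h1, h2, h3⟩; exact ⟨h1, by omega, h3⟩
    · rw [if_neg h, map_zero, if_neg]
      rintro ⟨h1, h2, h3⟩
      exact h ⟨h1, h2, by omega⟩

lemma BAp (hN : 1 ≤ N) (i j : ZMod m) (k : ℕ) (l : ℤ) :
    ((rB K m N j * rA K m N j) ^ (k + 1)) (s K m i l) =
    if i = j + 1 ∧ l ≤ 0 ∧ -(2 * N : ℤ) ≤ l - 2 * (k + 1) then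
      s K m i (if l - 2 * (k + 1) = - (2 * N : ℤ) then 2 * (N : ℤ) else l - 2 * (k + 1)) else 0 := by
  induction k generalizing l with
  | zero => simpa using BA_s K m N hN i j l
  | succ k ih =>
    rw [pow_succ, Module.End.mul_apply, BA_s K m N hN]
    by_cases h : i = j + 1 ∧ l ≤ 0 ∧ -(2 * N : ℤ) ≤ l - 2
    · rw [if_pos h, ih]
      by_cases h4 : l - 2 = -(2 * N : ℤ)
      · rw [if_pos h4, if_neg (by omega), if_neg (by push_cast; omega)]
      · rw [if_neg h4]
        have : l - 2 - 2 * ((k : ℤ) + 1) = l - 2 * (((k + 1 : ℕ) : ℤ) + 1) := by push_cast; ring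
        rw [this]
        congr 1
        simp only [eq_iff_iff]
        constructor
        · rintro ⟨h1, h2, h3⟩; exact ⟨h1, by omega, h3⟩
        · rintro ⟨h1, h2, h3⟩; exact ⟨h1, by omega, h3⟩
    · rw [if_neg h, map_zero, if_neg]
      rintro ⟨h1, h2, h3⟩
      exact h ⟨h1, h2, by omega⟩

noncomputable def rG : Gen m → Module.End K (V K m)
  | .e i => rE K m i
  | .a i => rA K m N i
  | .abar i => rB K m N i

lemma rG_rel (hN : 1 ≤ N) ⦃x y : FreeAlgebra K (Gen m)⦄ (h : LamRel K m N x y) :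
    FreeAlgebra.lift K (rG K m N) x = FreeAlgebra.lift K (rG K m N) y := by
  cases h with
  | idem j =>
    simp only [Efree, map_mul, FreeAlgebra.lift_ι_apply, rG]
    refine end_ext K m fun i l => ?_
    simp only [Module.End.mul_apply, rE_s]
    split_ifs with h <;> simp [rE_s, h]
  | orth j k h =>
    simp only [Efree, map_mul, map_zero, FreeAlgebra.lift_ι_apply, rG]
    refine end_ext K m fun i l => ?_
    simp only [Module.End.mul_apply, rE_s]
    split_ifs with h2
    · subst h2; simp [rE_s, h.symm]
    · simp
  | sum_e =>
    simp only [Efree, map_sum, map_one, FreeAlgebra.lift_ι_apply, rG]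
    refine end_ext K m fun i l => ?_
    simp [rE_s]
  | src_a j =>
    simp only [Efree, Afree, map_mul, FreeAlgebra.lift_ι_apply, rG]
    refine end_ext K m fun i l => ?_
    simp only [Module.End.mul_apply, rA_s]
    split_ifs with h <;> simp [rE_s]
  | tgt_a j =>
    simp only [Efree, Afree, map_mul, FreeAlgebra.lift_ι_apply, rG]
    refine end_ext K m fun i l => ?_
    simp only [Module.End.mul_apply, rE_s]
    split_ifs with h <;> simp [rA_s, h]
  | src_ab j =>
    simp only [Efree, ABfree, map_mul, FreeAlgebra.lift_ι_apply, rG]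
    refine end_ext K m fun i l => ?_
    simp only [Module.End.mul_apply, rB_s]
    split_ifs with h <;> simp [rE_s]
  | tgt_ab j =>
    simp only [Efree, ABfree, map_mul, FreeAlgebra.lift_ι_apply, rG]
    refine end_ext K m fun i l => ?_
    simp only [Module.End.mul_apply, rE_s]
    split_ifs with h <;> simp [rB_s, h]
  | zero_aa j =>
    simp only [Afree, map_mul, map_zero, FreeAlgebra.lift_ι_apply, rG]
    refine end_ext K m fun i l => ?_
    rw [Module.End.mul_apply, rA_s]
    split_ifs with h
    · rw [rA_s, if_neg (by omega)]; rfl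
    · simp
  | zero_abab j =>
    simp only [ABfree, map_mul, map_zero, FreeAlgebra.lift_ι_apply, rG]
    refine end_ext K m fun i l => ?_
    rw [Module.End.mul_apply, rB_s]
    by_cases h : i = j - 1 ∧ 0 ≤ l ∧ l < 2 * N
    · rw [if_pos h, rB_s, if_neg (by split_ifs <;> omega)]; rfl
    · rw [if_neg h]; simp
  | comm j =>
    simp only [Afree, ABfree, map_mul, map_pow, FreeAlgebra.lift_ι_apply, rG]
    refine end_ext K m fun i l => ?_
    obtain ⟨n, rfl⟩ : ∃ n, N = n + 1 := ⟨N - 1, by omega⟩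
    rw [ABp _ _ _ hN, BAp _ _ _ hN]
    rw [sub_add_cancel]
    by_cases h : i = j ∧ l = 0
    · obtain ⟨rfl, rfl⟩ := h
      simp
    · rw [if_neg, if_neg]
      · rintro ⟨h1, h2, h3⟩; exact h ⟨h1, by push_cast at h3; omega⟩
      · rintro ⟨h1, h2, h3⟩; exact h ⟨h1, by push_cast at h3; omega⟩

noncomputable def rho (hN : 1 ≤ N) : Lam K m N →ₐ[K] Module.End K (V K m) :=
  RingQuot.liftAlgHom K ⟨FreeAlgebra.lift K (rG K m N), rG_rel K m N hN⟩

lemma rho_e (hN : 1 ≤ N) (i : ZMod m) : rho K m N hN (e K m N i) = rE K m i := by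
  simp [rho, e, Efree, rG]
lemma rho_a (hN : 1 ≤ N) (i : ZMod m) : rho K m N hN (a K m N i) = rA K m N i := by
  simp [rho, a, Afree, rG]
lemma rho_b (hN : 1 ≤ N) (i : ZMod m) : rho K m N hN (ab K m N i) = rB K m N i := by
  simp [rho, ab, ABfree, rG]

noncomputable def u : V K m := ∑ i : ZMod m, s K m i 0

lemma rho_P (hN : 1 ≤ N) (k : ℕ) (i : ZMod m) :
    (k ≤ 2 * N → rho K m N hN (P K m N k true i) (u K m) = s K m i k) ∧
    (k < 2 * N → rho K m N hN (P K m N k false i) (u K m) = s K m i (-(k : ℤ))) := by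
  induction k generalizing i with
  | zero => simp [P, rho_e, u, rE_s]
  | succ k ih =>
    constructor
    · intro h
      simp only [P, map_mul, Module.End.mul_apply, rho_a]
      rw [(ih _).2 (by omega), rA_s, if_pos (by constructor; rfl; omega)]
      congr 1; push_cast; ring
    · intro h
      simp only [P, map_mul, Module.End.mul_apply, rho_b]
      rw [(ih _).1 (by omega), rB_s, if_pos (by constructor; rfl; omega), if_neg (by omega),
        sub_add_cancel]
      congr 1

lemma rho_X (hN : 1 ≤ N) (p : ZMod m × ℤ) (hp : p ∈ R m N) :
    rho K m N hN (X K m N p) (u K m) = Finsupp.single p 1 := by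
  obtain ⟨i, l⟩ := p
  obtain ⟨h1, h2⟩ := hp
  simp only at h1 h2
  change _ = s K m i l
  by_cases h : 0 ≤ l
  · simp only [X, h, decide_true]
    rw [(rho_P K m N hN _ _).1 (by omega)]
    congr 1; omega
  · simp only [X, h, decide_false]
    rw [(rho_P K m N hN _ _).2 (by omega)]
    congr 1; omega

lemma li (hN : 1 ≤ N) : LinearIndepOn K (X K m N) (R m N) := by
  let φ : Lam K m N →ₗ[K] V K m :=
    (LinearMap.applyₗ (u K m)).comp (rho K m N hN).toLinearMap
  apply LinearIndependent.of_comp φ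
  have : (φ ∘ fun p : R m N => X K m N p) = fun p : R m N => Finsupp.single (p : ZMod m × ℤ) 1 := by
    funext p
    exact rho_X K m N hN p p.2
  rw [this]
  exact (Finsupp.linearIndependent_single_one K (ZMod m × ℤ)).comp _ Subtype.val_injective

def tl (d : Bool) (k : ℕ) (i : ZMod m) : ZMod m :=
  if Even k then i else if d then i + 1 else i - 1

lemma Pe (k : ℕ) (d : Bool) (i : ZMod m) :
    P K m N k d i * e K m N (tl m d k i) = P K m N k d i := by
  induction k generalizing d i with
  | zero => simp [P, tl, ee]
  | succ k ih =>
    cases d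
    · have h : tl m false (k + 1) i = tl m true k (i - 1) := by
        by_cases h : Even k <;> simp [tl, h, Nat.even_add_one]
      rw [h]; simp only [P]; rw [mul_assoc, ih]
    · have h : tl m true (k + 1) i = tl m false k (i + 1) := by
        by_cases h : Even k <;> simp [tl, h, Nat.even_add_one]
      rw [h]; simp only [P]; rw [mul_assoc, ih]

def T (p : ZMod m × ℤ) : ZMod m := tl m (decide (0 ≤ p.2)) p.2.natAbs p.1

lemma eXe (i j : ZMod m) (p : ZMod m × ℤ) :
    e K m N i * (X K m N p * e K m N j) = if p.1 = i ∧ T m p = j then X K m N p else 0 := by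
  split_ifs with h
  · obtain ⟨rfl, rfl⟩ := h
    simp only [X, T]; rw [Pe, eP]
  · by_cases h1 : p.1 = i
    · have h2 : T m p ≠ j := fun h2 => h ⟨h1, h2⟩
      simp only [X]
      simp only [T] at h2
      rw [← Pe, mul_assoc (P _ _ _ _ _ _), eo _ _ _ _ _ h2, mul_zero, mul_zero]
    · simp only [X]
      rw [← mul_assoc, eP' _ _ _ _ _ _ _ (Ne.symm h1), zero_mul]

lemma corner_eq (hN : 1 ≤ N) (i j : ZMod m) :
    corner K m N i j = Submodule.span K (X K m N '' {p | p ∈ R m N ∧ p.1 = i ∧ T m p = j}) := by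
  apply le_antisymm
  · rw [corner, LinearMap.range_eq_map, ← span_top K m N hN, Submodule.map_span,
      Submodule.span_le]
    rintro _ ⟨_, ⟨p, hp, rfl⟩, rfl⟩
    simp only [LinearMap.comp_apply, LinearMap.mulLeft_apply, LinearMap.mulRight_apply, eXe]
    split_ifs with h
    · exact Submodule.subset_span ⟨p, ⟨hp, h⟩, rfl⟩
    · exact zero_mem _
  · rw [Submodule.span_le]
    rintro _ ⟨p, ⟨hp, h⟩, rfl⟩
    refine ⟨X K m N p, ?_⟩
    simp only [LinearMap.comp_apply, LinearMap.mulLeft_apply, LinearMap.mulRight_apply, eXe]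
    rw [if_pos h]

lemma rank_span (hN : 1 ≤ N) (F : Finset (ZMod m × ℤ)) (hF : ↑F ⊆ R m N) :
    Module.finrank K (Submodule.span K (X K m N '' ↑F)) = F.card := by
  have h := (li K m N hN).mono hF
  have := finrank_span_eq_card (R := K) (b := fun p : F => X K m N p) h
  rw [Fintype.card_coe] at this
  rw [← this, Set.image_eq_range]
  rfl

lemma rank_corner (hN : 1 ≤ N) (i j : ZMod m) (F : Finset ℤ)
    (hF : ∀ l, l ∈ F ↔ (-(2 * N : ℤ) < l ∧ l ≤ 2 * N) ∧ T m (i, l) = j) :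
    Module.finrank K (corner K m N i j) = F.card := by
  have : {p | p ∈ R m N ∧ p.1 = i ∧ T m p = j} = ↑({i} ×ˢ F : Finset (ZMod m × ℤ)) := by
    ext ⟨i', l⟩
    simp only [R, Set.mem_setOf_eq, Finset.coe_product, Finset.coe_singleton, Set.mem_prod,
      Set.mem_singleton_iff, Finset.mem_coe, hF]
    constructor
    · rintro ⟨h, rfl, h2⟩; exact ⟨rfl, h, h2⟩
    · rintro ⟨rfl, h, h2⟩; exact ⟨h, rfl, h2⟩
  rw [corner_eq K m N hN, this, rank_span K m N hN]
  · simp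
  · rw [← this]; exact fun p hp => hp.1

lemma T_eq (i : ZMod m) (l : ℤ) :
    T m (i, l) = if Even l then i else if 0 ≤ l then i + 1 else i - 1 := by
  simp [T, tl, Int.natAbs_even]

end LamAux

open LamAux in
theorem stmt5 (hm : 2 ≤ m) (hN : 1 ≤ N) :
    (∀ i : ZMod m, Module.finrank K (corner K m N i i) = 2 * N) ∧
    (3 ≤ m → ∀ i j : ZMod m, (i - j = 1 ∨ j - i = 1) →
      Module.finrank K (corner K m N i j) = N) ∧
    (3 ≤ m → ∀ i j : ZMod m, i ≠ j → i - j ≠ 1 → j - i ≠ 1 →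
      corner K m N i j = ⊥) ∧
    (3 ≤ m → Module.finrank K (Lam K m N) = 4 * N * m) := by
  have h10 : (1 : ZMod m) ≠ 0 := by
    intro h
    have := (ZMod.natCast_eq_zero_iff 1 m).1 (by simpa using h)
    have := Nat.le_of_dvd one_pos this
    omega
  have h20 : 3 ≤ m → (2 : ZMod m) ≠ 0 := by
    intro hm h
    have := (ZMod.natCast_eq_zero_iff 2 m).1 (by simpa using h)
    have := Nat.le_of_dvd two_pos this
    omega
  refine ⟨?_, ?_, ?_, ?_⟩
  · intro i
    rw [rank_corner K m N hN i i ((Finset.Ioc (-(N : ℤ)) N).image (fun x => 2 * x))]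
    · rw [Finset.card_image_of_injective _ (fun x y h => by simpa using h), Int.card_Ioc]
      omega
    · intro l
      rw [T_eq]
      simp only [Finset.mem_image, Finset.mem_Ioc]
      constructor
      · rintro ⟨x, hx, rfl⟩
        exact ⟨by omega, by simp⟩
      · rintro ⟨h1, h2⟩
        by_cases h : Even l
        · obtain ⟨x, rfl⟩ := h
          exact ⟨x, by omega, by ring⟩
        · rw [if_neg h] at h2
          split_ifs at h2 <;> simp [h10] at h2
  · intro hm3 i j hij
    have h2 := h20 hm3
    rcases hij with hij | hij
    · obtain rfl : i = j + 1 := by rw [← hij]; ring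
      rw [rank_corner K m N hN _ j ((Finset.Ico (-(N : ℤ)) 0).image (fun x => 2 * x + 1))]
      · rw [Finset.card_image_of_injective _ (fun x y h => by simpa using h), Int.card_Ico]
        omega
      · intro l
        rw [T_eq]
        simp only [Finset.mem_image, Finset.mem_Ico]
        constructor
        · rintro ⟨x, hx, rfl⟩
          refine ⟨by omega, ?_⟩
          rw [if_neg (by simp), if_neg (by omega)]; ring
        · rintro ⟨h1, h3⟩
          by_cases h : Even l
          · rw [if_pos h] at h3; simp [h10] at h3
          · rw [if_neg h] at h3
            split_ifs at h3 with h4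
            · rw [add_assoc, one_add_one_eq_two] at h3; simp [h2] at h3
            · obtain ⟨x, rfl⟩ := Int.not_even_iff_odd.1 h
              exact ⟨x, by omega, by ring⟩
    · obtain rfl : j = i + 1 := by rw [← hij]; ring
      rw [rank_corner K m N hN i _ ((Finset.Ico (0 : ℤ) N).image (fun x => 2 * x + 1))]
      · rw [Finset.card_image_of_injective _ (fun x y h => by simpa using h), Int.card_Ico]
        omega
      · intro l
        rw [T_eq]
        simp only [Finset.mem_image, Finset.mem_Ico]
        constructor
        · rintro ⟨x, hx, rfl⟩
          refine ⟨by omega, ?_⟩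
          rw [if_neg (by simp), if_pos (by omega)]
        · rintro ⟨h1, h3⟩
          by_cases h : Even l
          · rw [if_pos h] at h3; simp [h10] at h3
          · rw [if_neg h] at h3
            split_ifs at h3 with h4
            · obtain ⟨x, rfl⟩ := Int.not_even_iff_odd.1 h
              exact ⟨x, by omega, by ring⟩
            · exact absurd (by linear_combination -h3) h2
  · intro hm3 i j h0 h1 h2
    rw [corner_eq K m N hN, Submodule.span_eq_bot]
    rintro _ ⟨⟨i', l⟩, ⟨hp, rfl, hT⟩, rfl⟩
    exfalso
    rw [T_eq] at hT
    simp only at h0 h1 h2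
    split_ifs at hT
    · exact h0 hT
    · exact h2 (by rw [← hT]; ring)
    · exact h1 (by rw [← hT]; ring)
  · intro hm3
    have hR : R m N = ↑(Finset.univ ×ˢ Finset.Ioc (-(2 * N : ℤ)) (2 * N) :
        Finset (ZMod m × ℤ)) := by
      ext ⟨i, l⟩; simp [R]
    have h := rank_span K m N hN _ hR.symm.subset
    rw [← hR, span_top K m N hN, finrank_top] at h
    rw [h, Finset.card_product, Finset.card_univ, ZMod.card, Int.card_Ioc]
    have : ((2 * N : ℤ) - -(2 * N)).toNat = 4 * N := by omega
    rw [this, mul_comm]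
end

section
/- Let K be a field, m ≥ 3, N ≥ 1, Λ_N as above, and P^n = ⊕_{i=0}^{m-1} ⊕_{r=0}^{n} Λ_N e_i ⊗ e_{i+n-2r} Λ_N. Write n = pm + t with 0 ≤ t ≤ m-1. Then dim_K Hom_{Λ_N^e}(P^n, Λ_N) = (4p+2)mN if t ≠ m-1, and (4p+4)mN if t = m-1. -/
variable (K : Type) [Field K] (m N : ℕ) [NeZero m]

open scoped TensorProduct

/-- `Λ_N e_i`, the left-multiple space, i.e. the range of right multiplication by `e_i`. -/
def Lsub (i : ZMod m) : Submodule K (Lam K m N) :=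
  LinearMap.range (LinearMap.mulRight K (e K m N i))

/-- `e_j Λ_N`, the range of left multiplication by `e_j`. -/
def Rsub (j : ZMod m) : Submodule K (Lam K m N) :=
  LinearMap.range (LinearMap.mulLeft K (e K m N j))

/-- The projective bimodule
`P^n = ⊕_{i=0}^{m-1} ⊕_{r=0}^{n} Λ_N e_i ⊗_K e_{i+n-2r} Λ_N`. -/
abbrev Pmod (n : ℕ) : Type :=
  ∀ σ : ZMod m × Fin (n + 1),
    (Lsub K m N σ.1) ⊗[K] (Rsub K m N (σ.1 + (n : ZMod m) - 2 * ((σ.2 : ℕ) : ZMod m)))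

/-- Left multiplication by `c` on `Λ_N e_i`. -/
def lact (i : ZMod m) (c : Lam K m N) : (Lsub K m N i) →ₗ[K] (Lsub K m N i) :=
  (LinearMap.mulLeft K c).restrict (p := Lsub K m N i) (q := Lsub K m N i) (by
    rintro x ⟨y, rfl⟩
    exact ⟨c * y, by simp [LinearMap.mulRight_apply, LinearMap.mulLeft_apply, mul_assoc]⟩)

/-- Right multiplication by `c` on `e_j Λ_N`. -/
def ract (j : ZMod m) (c : Lam K m N) : (Rsub K m N j) →ₗ[K] (Rsub K m N j) :=
  (LinearMap.mulRight K c).restrict (p := Rsub K m N j) (q := Rsub K m N j) (by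
    rintro x ⟨y, rfl⟩
    exact ⟨y * c, by simp [LinearMap.mulRight_apply, LinearMap.mulLeft_apply, mul_assoc]⟩)

/-- The bimodule action of `(cl, cr)` on `P^n`: `x ↦ cl • x • cr`. -/
noncomputable def actP (n : ℕ) (cl cr : Lam K m N) : Pmod K m N n →ₗ[K] Pmod K m N n :=
  LinearMap.pi fun σ =>
    (TensorProduct.map (lact K m N σ.1 cl) (ract K m N _ cr)).comp (LinearMap.proj σ)

/-- The space `Hom_{Λ_N^e}(P^n, Λ_N)` of bimodule homomorphisms, realised as the
`K`-linear maps `P^n → Λ_N` commuting with the bimodule actions. -/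
noncomputable def HomSpace (n : ℕ) : Submodule K ((Pmod K m N n) →ₗ[K] Lam K m N) where
  carrier := {f | ∀ (cl cr : Lam K m N) (x : Pmod K m N n),
    f (actP K m N n cl cr x) = cl * f x * cr}
  add_mem' := by
    intro f g hf hg cl cr x
    simp only [LinearMap.add_apply, hf cl cr x, hg cl cr x, mul_add, add_mul]
  zero_mem' := by
    intro cl cr x
    simp
  smul_mem' := by
    intro c f hf cl cr x
    simp only [LinearMap.smul_apply, hf cl cr x, Algebra.mul_smul_comm, Algebra.smul_mul_assoc]

namespace Stmt10
section count

theorem pairs (f : ℕ → ℕ) (n : ℕ) :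
    ∑ r ∈ Finset.range n, (f (2 * r) + f (2 * r + 1)) = ∑ s ∈ Finset.range (2 * n), f s := by
  induction n with
  | zero => simp
  | succ n ih => rw [Finset.sum_range_succ, ih, show 2 * (n + 1) = 2 * n + 1 + 1 by ring,
      Finset.sum_range_succ, Finset.sum_range_succ]; ring

theorem count_aux (m p t : ℕ) (hm : 3 ≤ m) (ht : t < m) :
    ∑ s ∈ Finset.range (2 * (p * m + t + 1)), (if ((p * m + t : ℕ) : ZMod m) = s then 1 else 0)
      = if t = m - 1 then 2 * p + 2 else 2 * p + 1 := by
  have h := Nat.count_modEq_card (2 * (p * m + t + 1)) (r := m) (by omega) (p * m + t)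
  have h2 : ∑ s ∈ Finset.range (2 * (p * m + t + 1)),
      (if ((p * m + t : ℕ) : ZMod m) = s then 1 else 0)
      = Nat.count (fun x => x ≡ p * m + t [MOD m]) (2 * (p * m + t + 1)) := by
    rw [Nat.count_eq_card_filter_range, Finset.card_filter]
    refine Finset.sum_congr rfl fun s _ => ?_
    simp only [ZMod.natCast_eq_natCast_iff]
    simp only [Nat.ModEq.comm]
  rw [h2, h]
  have e1 : (p * m + t) % m = t := by
    rw [Nat.mul_comm, Nat.mul_add_mod, Nat.mod_eq_of_lt ht]
  rw [e1]
  have e2 : 2 * (p * m + t + 1) = m * (2 * p) + (2 * t + 2) := by ring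
  rw [e2, Nat.mul_add_mod, Nat.mul_add_div (by omega)]
  by_cases c1 : 2 * t + 2 < m
  · rw [Nat.mod_eq_of_lt c1, Nat.div_eq_of_lt c1]; grind
  by_cases c2 : t = m - 1
  · have : 2 * t + 2 = m * 2 := by omega
    rw [this]; simp [c2, show 0 < m by omega]
  · have e3 : 2 * t + 2 = m * 1 + (2 * t + 2 - m) := by omega
    have e4 : 2 * t + 2 - m < m := by omega
    rw [e3, Nat.mul_add_mod, Nat.mul_add_div (by omega), Nat.mod_eq_of_lt e4, Nat.div_eq_of_lt e4]
    grind

theorem count_main (m p t : ℕ) (hm : 3 ≤ m) (ht : t < m) (n : ℕ) (hn : n = p * m + t) :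
    ∑ r ∈ Finset.range (n + 1), ((if (n : ZMod m) - 2 * (r : ZMod m) = 0 then 2 else 0)
      + (if (n : ZMod m) - 2 * (r : ZMod m) = 1 then 1 else 0)
      + (if (n : ZMod m) - 2 * (r : ZMod m) = -1 then 1 else 0))
      = 2 * if t = m - 1 then 2 * p + 2 else 2 * p + 1 := by
  rw [← count_aux m p t hm ht, ← hn, ← pairs]
  rw [Finset.sum_add_distrib, ← Finset.sum_range_reflect
    (fun r => (if (n : ZMod m) - 2 * (r : ZMod m) = -1 then 1 else 0)), ← Finset.sum_add_distrib,
    Finset.mul_sum]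
  refine Finset.sum_congr rfl fun r hr => ?_
  have hr' : r ≤ n := by simpa [Nat.lt_succ_iff] using hr
  have : ((n + 1 - 1 - r : ℕ) : ZMod m) = n - r := by
    rw [Nat.add_sub_cancel, Nat.cast_sub hr']
  rw [this]
  push_cast
  have i1 : ((n : ZMod m) = 2 * r) ↔ (n : ZMod m) - 2 * r = 0 := by grind
  have i2 : ((n : ZMod m) = 2 * r + 1) ↔ (n : ZMod m) - 2 * r = 1 := by grind
  have i3 : ((n : ZMod m) - 2 * (n - r) = -1) ↔ (n : ZMod m) - 2 * r = 1 := by grind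
  simp only [i1, i2, i3]
  grind
end count

section rels
theorem mk_rel {x y : FreeAlgebra K (Gen m)} (h : LamRel K m N x y) :
    RingQuot.mkAlgHom K (LamRel K m N) x = RingQuot.mkAlgHom K (LamRel K m N) y :=
  RingQuot.mkAlgHom_rel K h

theorem ee (i : ZMod m) : e K m N i * e K m N i = e K m N i := by
  simpa [e] using mk_rel K m N (.idem i)
theorem eo (i j : ZMod m) (h : i ≠ j) : e K m N i * e K m N j = 0 := by
  simpa [e] using mk_rel K m N (.orth i j h)
theorem esum : ∑ i, e K m N i = 1 := by
  simpa [e] using mk_rel K m N .sum_e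
theorem ea (i : ZMod m) : e K m N i * a K m N i = a K m N i := by
  simpa [e, a] using mk_rel K m N (.src_a i)
theorem ae (i : ZMod m) : a K m N i * e K m N (i+1) = a K m N i := by
  simpa [e, a] using mk_rel K m N (.tgt_a i)
theorem eb (i : ZMod m) : e K m N (i+1) * ab K m N i = ab K m N i := by
  simpa [e, ab] using mk_rel K m N (.src_ab i)
theorem be (i : ZMod m) : ab K m N i * e K m N i = ab K m N i := by
  simpa [e, ab] using mk_rel K m N (.tgt_ab i)
theorem aa (i : ZMod m) : a K m N i * a K m N (i+1) = 0 := by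
  simpa [a] using mk_rel K m N (.zero_aa i)
theorem bb (i : ZMod m) : ab K m N i * ab K m N (i-1) = 0 := by
  simpa [ab] using mk_rel K m N (.zero_abab i)
theorem comm (i : ZMod m) : (a K m N i * ab K m N i)^N = (ab K m N (i-1) * a K m N (i-1))^N := by
  simpa [a, ab] using mk_rel K m N (.comm i)

theorem aa' (i j : ZMod m) : a K m N i * a K m N j = 0 := by
  by_cases h : j = i + 1
  · rw [h, aa]
  · rw [← ae, ← ea K m N j, mul_assoc, ← mul_assoc (e K m N (i+1)), eo K m N _ _ (Ne.symm h)]; simp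
theorem bb' (i j : ZMod m) : ab K m N i * ab K m N j = 0 := by
  by_cases h : i = j + 1
  · rw [h]; simpa using bb K m N (j+1)
  · rw [← be, ← eb K m N j, mul_assoc, ← mul_assoc (e K m N i), eo K m N _ _ h]; simp

/-- paths starting with a -/
noncomputable def P (i : ZMod m) : ℕ → Lam K m N
  | 0 => e K m N i
  | n + 1 => P i n * (if n % 2 = 0 then a K m N i else ab K m N i)
/-- paths starting with abar -/
noncomputable def Q (i : ZMod m) : ℕ → Lam K m N
  | 0 => e K m N i
  | n + 1 => Q i n * (if n % 2 = 0 then ab K m N (i-1) else a K m N (i-1))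

theorem P_even (i : ZMod m) (s : ℕ) : P K m N i (2 * s) = e K m N i * (a K m N i * ab K m N i)^s := by
  induction s with
  | zero => simp [P]
  | succ s ih =>
    rw [show 2 * (s + 1) = 2 * s + 1 + 1 by ring, P, P, ih, pow_succ]
    simp [mul_assoc, Nat.add_mod]
theorem Q_even (i : ZMod m) (s : ℕ) :
    Q K m N i (2 * s) = e K m N i * (ab K m N (i-1) * a K m N (i-1))^s := by
  induction s with
  | zero => simp [Q]
  | succ s ih =>
    rw [show 2 * (s + 1) = 2 * s + 1 + 1 by ring, Q, Q, ih, pow_succ]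
    simp [mul_assoc, Nat.add_mod]
theorem PQ (i : ZMod m) : P K m N i (2 * N) = Q K m N i (2 * N) := by
  rw [P_even, Q_even, comm]

/-- end vertices -/
def vP (i : ZMod m) (n : ℕ) : ZMod m := if n % 2 = 0 then i else i + 1
def vQ (i : ZMod m) (n : ℕ) : ZMod m := if n % 2 = 0 then i else i - 1

theorem P_e (i : ZMod m) (n : ℕ) : P K m N i n * e K m N (vP m i n) = P K m N i n := by
  cases n with
  | zero => simp [P, vP, ee]
  | succ n =>
    rcases Nat.mod_two_eq_zero_or_one n with h | h
    · simp [P, vP, h, mul_assoc, show (n+1)%2 = 1 by omega, ae]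
    · simp [P, vP, h, mul_assoc, show (n+1)%2 = 0 by omega, be]
theorem Q_e (i : ZMod m) (n : ℕ) : Q K m N i n * e K m N (vQ m i n) = Q K m N i n := by
  cases n with
  | zero => simp [Q, vQ, ee]
  | succ n =>
    rcases Nat.mod_two_eq_zero_or_one n with h | h
    · simp [Q, vQ, h, mul_assoc, show (n+1)%2 = 1 by omega, be]
    · simp [Q, vQ, h, mul_assoc, show (n+1)%2 = 0 by omega]
      simpa using congrArg (Q K m N i n * ·) (ae K m N (i-1))
theorem P_e' (i j : ZMod m) (n : ℕ) (h : vP m i n ≠ j) : P K m N i n * e K m N j = 0 := by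
  rw [← P_e, mul_assoc, eo K m N _ _ h, mul_zero]
theorem Q_e' (i j : ZMod m) (n : ℕ) (h : vQ m i n ≠ j) : Q K m N i n * e K m N j = 0 := by
  rw [← Q_e, mul_assoc, eo K m N _ _ h, mul_zero]
theorem P_a' (i j : ZMod m) (n : ℕ) (h : vP m i n ≠ j) : P K m N i n * a K m N j = 0 := by
  rw [← ea, ← mul_assoc, P_e' K m N _ _ _ h, zero_mul]
theorem Q_a' (i j : ZMod m) (n : ℕ) (h : vQ m i n ≠ j) : Q K m N i n * a K m N j = 0 := by
  rw [← ea, ← mul_assoc, Q_e' K m N _ _ _ h, zero_mul]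
theorem P_b' (i j : ZMod m) (n : ℕ) (h : vP m i n ≠ j + 1) : P K m N i n * ab K m N j = 0 := by
  rw [← eb, ← mul_assoc, P_e' K m N _ _ _ h, zero_mul]
theorem Q_b' (i j : ZMod m) (n : ℕ) (h : vQ m i n ≠ j + 1) : Q K m N i n * ab K m N j = 0 := by
  rw [← eb, ← mul_assoc, Q_e' K m N _ _ _ h, zero_mul]

theorem P_big (hN : 1 ≤ N) (i : ZMod m) (k : ℕ) : P K m N i (2 * N + 1 + k) = 0 := by
  induction k with
  | zero =>
    obtain ⟨M, rfl⟩ : ∃ M, N = M + 1 := ⟨N - 1, by omega⟩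
    rw [add_zero, P, PQ, show 2 * (M + 1) = 2 * M + 1 + 1 by ring, Q]
    simp [show (2 * M + 1) % 2 = 1 by omega, show (2 * M + 1 + 1) % 2 = 0 by omega, mul_assoc, aa']
  | succ k ih => rw [← add_assoc, P, ih, zero_mul]
theorem Q_big (hN : 1 ≤ N) (i : ZMod m) (k : ℕ) : Q K m N i (2 * N + 1 + k) = 0 := by
  induction k with
  | zero =>
    obtain ⟨M, rfl⟩ : ∃ M, N = M + 1 := ⟨N - 1, by omega⟩
    rw [add_zero, Q, ← PQ, show 2 * (M + 1) = 2 * M + 1 + 1 by ring, P]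
    simp [show (2 * M + 1) % 2 = 1 by omega, show (2 * M + 1 + 1) % 2 = 0 by omega, mul_assoc, bb']
  | succ k ih => rw [← add_assoc, Q, ih, zero_mul]

theorem P_a (i j : ZMod m) (n : ℕ) :
    P K m N i n * a K m N j = 0 ∨ P K m N i n * a K m N j = P K m N i (n+1)
      ∨ P K m N i n * a K m N j = Q K m N i 1 := by
  rcases Nat.mod_two_eq_zero_or_one n with h | h
  · by_cases hj : i = j
    · subst hj; right; left; simp [P, h]
    · left; apply P_a'; simpa [vP, h]
  · obtain ⟨n, rfl⟩ : ∃ M, n = M + 1 := ⟨n - 1, by omega⟩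
    left; simp [P, show n % 2 = 0 by omega, mul_assoc, aa']
theorem P_b (i j : ZMod m) (n : ℕ) :
    P K m N i n * ab K m N j = 0 ∨ P K m N i n * ab K m N j = P K m N i (n+1)
      ∨ P K m N i n * ab K m N j = Q K m N i 1 := by
  rcases Nat.mod_two_eq_zero_or_one n with h | h
  · rcases Nat.eq_zero_or_pos n with h0 | h0
    · subst h0
      by_cases hj : i = j + 1
      · subst hj; right; right; simp [P, Q]
      · left; apply P_b'; simpa [vP]
    · obtain ⟨n, rfl⟩ : ∃ M, n = M + 1 := ⟨n - 1, by omega⟩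
      left; simp [P, show n % 2 = 1 by omega, mul_assoc, bb']
  · by_cases hj : i = j
    · subst hj; right; left; simp [P, h]
    · left; apply P_b'; simpa [vP, h]
theorem Q_a (i j : ZMod m) (n : ℕ) :
    Q K m N i n * a K m N j = 0 ∨ Q K m N i n * a K m N j = Q K m N i (n+1)
      ∨ Q K m N i n * a K m N j = P K m N i 1 := by
  rcases Nat.mod_two_eq_zero_or_one n with h | h
  · rcases Nat.eq_zero_or_pos n with h0 | h0
    · subst h0
      by_cases hj : i = j
      · subst hj; right; right; simp [P, Q]
      · left; apply Q_a'; simpa [vQ]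
    · obtain ⟨n, rfl⟩ : ∃ M, n = M + 1 := ⟨n - 1, by omega⟩
      left; simp [Q, show n % 2 = 1 by omega, mul_assoc, aa']
  · by_cases hj : i - 1 = j
    · subst hj; right; left; simp [Q, h]
    · left; apply Q_a'; simpa [vQ, h]
theorem Q_b (i j : ZMod m) (n : ℕ) :
    Q K m N i n * ab K m N j = 0 ∨ Q K m N i n * ab K m N j = Q K m N i (n+1)
      ∨ Q K m N i n * ab K m N j = P K m N i 1 := by
  rcases Nat.mod_two_eq_zero_or_one n with h | h
  · by_cases hj : i - 1 = j
    · subst hj; right; left; simp [Q, h]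
    · left; apply Q_b'; simp [vQ, h]; grind
  · obtain ⟨n, rfl⟩ : ∃ M, n = M + 1 := ⟨n - 1, by omega⟩
    left; simp [Q, show n % 2 = 0 by omega, mul_assoc, bb']

/-- path indexed by an integer -/
noncomputable def bas (i : ZMod m) (k : ℤ) : Lam K m N :=
  if 0 ≤ k then P K m N i k.natAbs else Q K m N i k.natAbs
def vb (i : ZMod m) (k : ℤ) : ZMod m := if k % 2 = 0 then i else if 0 < k then i + 1 else i - 1

theorem bas_e (i : ZMod m) (k : ℤ) : bas K m N i k * e K m N (vb m i k) = bas K m N i k := by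
  have hp : 0 ≤ k → vb m i k = vP m i k.natAbs := by intro h; unfold vb vP; grind
  have hq : ¬ 0 ≤ k → vb m i k = vQ m i k.natAbs := by intro h; unfold vb vQ; grind
  unfold bas
  split_ifs with h
  · rw [hp h, P_e]
  · rw [hq h, Q_e]
theorem bas_e' (i j : ZMod m) (k : ℤ) (h : vb m i k ≠ j) : bas K m N i k * e K m N j = 0 := by
  rw [← bas_e, mul_assoc, eo K m N _ _ h, mul_zero]
theorem e_P (i : ZMod m) (n : ℕ) : e K m N i * P K m N i n = P K m N i n := by
  induction n with
  | zero => simp [P, ee]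
  | succ n ih => rw [P, ← mul_assoc, ih]
theorem e_Q (i : ZMod m) (n : ℕ) : e K m N i * Q K m N i n = Q K m N i n := by
  induction n with
  | zero => simp [Q, ee]
  | succ n ih => rw [Q, ← mul_assoc, ih]
theorem e_bas (i : ZMod m) (k : ℤ) : e K m N i * bas K m N i k = bas K m N i k := by
  unfold bas; split_ifs <;> simp [e_P, e_Q]

/-- the span -/
noncomputable def W (i : ZMod m) : Submodule K (Lam K m N) :=
  Submodule.span K (bas K m N i '' (Set.Ioc (-2 * N : ℤ) (2 * N)))

theorem P_mem (hN : 1 ≤ N) (i : ZMod m) (n : ℕ) : P K m N i n ∈ W K m N i := by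
  by_cases h : n ≤ 2 * N
  · apply Submodule.subset_span
    refine ⟨n, ⟨by omega, by omega⟩, by simp [bas]⟩
  · obtain ⟨k, rfl⟩ : ∃ k, n = 2 * N + 1 + k := ⟨n - (2 * N + 1), by omega⟩
    rw [P_big K m N hN]; simp
theorem Q_mem (hN : 1 ≤ N) (i : ZMod m) (n : ℕ) : Q K m N i n ∈ W K m N i := by
  by_cases h : n < 2 * N
  · rcases Nat.eq_zero_or_pos n with h0 | h0
    · subst h0; exact P_mem K m N hN i 0
    apply Submodule.subset_span
    refine ⟨-n, ⟨by omega, by omega⟩, ?_⟩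
    simp [bas, show ¬ n = 0 by omega]
  · by_cases h : n = 2 * N
    · rw [h, ← PQ]; exact P_mem K m N hN i _
    obtain ⟨k, rfl⟩ : ∃ k, n = 2 * N + 1 + k := ⟨n - (2 * N + 1), by omega⟩
    rw [Q_big K m N hN]; simp

theorem bas_cases (i : ZMod m) (k : ℤ) : (∃ n, bas K m N i k = P K m N i n) ∨
    (∃ n, bas K m N i k = Q K m N i n) := by
  unfold bas; split_ifs
  · exact .inl ⟨_, rfl⟩
  · exact .inr ⟨_, rfl⟩

theorem W_gen (hN : 1 ≤ N) (i : ZMod m) (g : Gen m) (x : Lam K m N) (hx : x ∈ W K m N i) :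
    x * RingQuot.mkAlgHom K (LamRel K m N) (FreeAlgebra.ι K g) ∈ W K m N i := by
  have hP := P_mem K m N hN i
  have hQ := Q_mem K m N hN i
  induction hx using Submodule.span_induction with
  | zero => simp
  | add x y _ _ h1 h2 => rw [add_mul]; exact add_mem h1 h2
  | smul c x _ h => rw [smul_mul_assoc]; exact Submodule.smul_mem _ _ h
  | mem x hx =>
    obtain ⟨k, hk, rfl⟩ := hx
    cases g with
    | e j =>
      change bas K m N i k * e K m N j ∈ _
      by_cases h : vb m i k = j
      · rw [← h, bas_e]; exact Submodule.subset_span ⟨k, hk, rfl⟩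
      · rw [bas_e' K m N _ _ _ h]; simp
    | a j =>
      change bas K m N i k * a K m N j ∈ _
      rcases bas_cases K m N i k with ⟨n, h⟩ | ⟨n, h⟩ <;> rw [h]
      · rcases P_a K m N i j n with h | h | h <;> rw [h]
        · simp
        · exact hP _
        · exact hQ _
      · rcases Q_a K m N i j n with h | h | h <;> rw [h]
        · simp
        · exact hQ _
        · exact hP _
    | abar j =>
      change bas K m N i k * ab K m N j ∈ _
      rcases bas_cases K m N i k with ⟨n, h⟩ | ⟨n, h⟩ <;> rw [h]
      · rcases P_b K m N i j n with h | h | h <;> rw [h]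
        · simp
        · exact hP _
        · exact hQ _
      · rcases Q_b K m N i j n with h | h | h <;> rw [h]
        · simp
        · exact hQ _
        · exact hP _

theorem W_mul (hN : 1 ≤ N) (i : ZMod m) (y : Lam K m N) :
    ∀ x ∈ W K m N i, x * y ∈ W K m N i := by
  obtain ⟨y, rfl⟩ := RingQuot.mkAlgHom_surjective K (LamRel K m N) y
  induction y using FreeAlgebra.induction with
  | grade0 r =>
    intro x hx
    rw [AlgHom.commutes, ← Algebra.commutes, ← Algebra.smul_def]
    exact Submodule.smul_mem _ _ hx
  | grade1 g => exact W_gen K m N hN i g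
  | mul u v hu hv => intro x hx; rw [map_mul, ← mul_assoc]; exact hv _ (hu _ hx)
  | add u v hu hv => intro x hx; rw [map_add, mul_add]; exact add_mem (hu _ hx) (hv _ hx)

/-- corner -/
noncomputable def corner (i j : ZMod m) : Submodule K (Lam K m N) :=
  LinearMap.range ((LinearMap.mulRight K (e K m N j)).comp (LinearMap.mulLeft K (e K m N i)))

theorem mem_corner {i j : ZMod m} {x : Lam K m N} :
    x ∈ corner K m N i j ↔ e K m N i * x * e K m N j = x := by
  constructor
  · rintro ⟨y, rfl⟩
    simp only [LinearMap.comp_apply, LinearMap.mulRight_apply, LinearMap.mulLeft_apply]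
    simp only [mul_assoc, ee]
    simp only [← mul_assoc, ee]
  · intro h; exact ⟨x, by simpa using h⟩

theorem corner_eq (hN : 1 ≤ N) (i j : ZMod m) : corner K m N i j =
    Submodule.span K (bas K m N i '' {k | k ∈ Set.Ioc (-2 * N : ℤ) (2 * N) ∧ vb m i k = j}) := by
  apply le_antisymm
  · rintro _ ⟨y, rfl⟩
    simp only [LinearMap.comp_apply, LinearMap.mulRight_apply, LinearMap.mulLeft_apply]
    have := W_mul K m N hN i y _ (P_mem K m N hN i 0)
    simp only [P] at this
    generalize e K m N i * y = x at this
    induction this using Submodule.span_induction with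
    | zero => simp
    | add x y _ _ h1 h2 => rw [add_mul]; exact add_mem h1 h2
    | smul c x _ h => rw [smul_mul_assoc]; exact Submodule.smul_mem _ _ h
    | mem x hx =>
      obtain ⟨k, hk, rfl⟩ := hx
      by_cases h : vb m i k = j
      · rw [← h, bas_e]; exact Submodule.subset_span ⟨k, ⟨hk, rfl⟩, rfl⟩
      · rw [bas_e' K m N _ _ _ h]; simp
  · rw [Submodule.span_le]
    rintro _ ⟨k, ⟨_, rfl⟩, rfl⟩
    exact (mem_corner K m N).2 (by rw [e_bas, bas_e])
end rels
end Stmt10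
namespace Stmt10
section rep
/-- operators -/
noncomputable def rE (i j : ZMod m) : Module.End K (ℤ → K) where
  toFun F k := if vb m i k = j then F k else 0
  map_add' F G := by funext k; simp only [Pi.add_apply]; split_ifs <;> simp
  map_smul' c F := by funext k; simp
noncomputable def rA (i j : ZMod m) : Module.End K (ℤ → K) where
  toFun F k := if k % 2 = 0 ∧ 0 ≤ k ∧ k < 2 * N ∧ j = i then F (k + 1) else
    if k % 2 = 1 ∧ k < 0 ∧ -2 * N < k ∧ j = i - 1 then
      F (if k - 1 = -2 * N then 2 * N else k - 1) else 0
  map_add' F G := by funext k; simp only [Pi.add_apply]; split_ifs <;> simp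
  map_smul' c F := by funext k; simp
noncomputable def rB (i j : ZMod m) : Module.End K (ℤ → K) where
  toFun F k := if k % 2 = 1 ∧ 0 < k ∧ k < 2 * N ∧ j = i then F (k + 1) else
    if k % 2 = 0 ∧ k ≤ 0 ∧ -2 * N < k ∧ j = i - 1 then F (k - 1) else 0
  map_add' F G := by funext k; simp only [Pi.add_apply]; split_ifs <;> simp
  map_smul' c F := by funext k; simp

theorem rE_app (i j : ZMod m) (F : ℤ → K) (k : ℤ) :
  rE K m i j F k = if vb m i k = j then F k else 0 := rfl
theorem rA_app (i j : ZMod m) (F : ℤ → K) (k : ℤ) :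
  rA K m N i j F k = if k % 2 = 0 ∧ 0 ≤ k ∧ k < 2 * N ∧ j = i then F (k + 1) else
    if k % 2 = 1 ∧ k < 0 ∧ -2 * N < k ∧ j = i - 1 then
      F (if k - 1 = -2 * N then 2 * N else k - 1) else 0 := rfl
theorem rB_app (i j : ZMod m) (F : ℤ → K) (k : ℤ) :
  rB K m N i j F k = if k % 2 = 1 ∧ 0 < k ∧ k < 2 * N ∧ j = i then F (k + 1) else
    if k % 2 = 0 ∧ k ≤ 0 ∧ -2 * N < k ∧ j = i - 1 then F (k - 1) else 0 := rfl

theorem rAB (i j : ZMod m) (F : ℤ → K) (k : ℤ) : (rA K m N i j * rB K m N i j) F k =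
    if k % 2 = 0 ∧ 0 ≤ k ∧ k < 2 * N ∧ j = i then F (k + 2) else
    if k % 2 = 1 ∧ k < 0 ∧ -2 * N + 1 < k ∧ j = i - 1 then F (k - 2) else 0 := by
  rw [Module.End.mul_apply, rA_app]
  simp only [rB_app]
  grind

theorem rBA (i j : ZMod m) (F : ℤ → K) (k : ℤ) : (rB K m N i j * rA K m N i j) F k =
    if k % 2 = 1 ∧ 0 < k ∧ k + 1 < 2 * N ∧ j = i then F (k + 2) else
    if k % 2 = 0 ∧ k ≤ 0 ∧ -2 * N < k ∧ j = i - 1 then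
      F (if k - 2 = -2 * N then 2 * N else k - 2) else 0 := by
  rw [Module.End.mul_apply, rB_app]
  simp only [rA_app]
  grind

theorem rAB_pow (i j : ZMod m) (s : ℕ) : ∀ (F : ℤ → K) (k : ℤ),
    ((rA K m N i j * rB K m N i j) ^ (s + 1)) F k =
    if k % 2 = 0 ∧ 0 ≤ k ∧ k + 2 * s < 2 * N ∧ j = i then F (k + 2 * (s + 1)) else
    if k % 2 = 1 ∧ k < 0 ∧ -2 * N + 1 < k - 2 * s ∧ j = i - 1 then F (k - 2 * (s + 1)) else 0 := by
  induction s with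
  | zero => intro F k; rw [zero_add, pow_one, rAB]; simp
  | succ s ih =>
    intro F k
    rw [pow_succ', Module.End.mul_apply, rAB]
    simp only [ih]
    push_cast
    have e1 : k + 2 + 2 * ((s : ℤ) + 1) = k + 2 * ((s : ℤ) + 1 + 1) := by ring
    have e2 : k - 2 - 2 * ((s : ℤ) + 1) = k - 2 * ((s : ℤ) + 1 + 1) := by ring
    rw [e1, e2]
    split_ifs <;> first | rfl | (exfalso; grind)

set_option maxHeartbeats 2000000 in
theorem rBA_pow (i j : ZMod m) (s : ℕ) : ∀ (F : ℤ → K) (k : ℤ),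
    ((rB K m N i j * rA K m N i j) ^ (s + 1)) F k =
    if k % 2 = 1 ∧ 0 < k ∧ k + 1 + 2 * s < 2 * N ∧ j = i then F (k + 2 * (s + 1)) else
    if k % 2 = 0 ∧ k ≤ 0 ∧ -2 * N < k - 2 * s ∧ j = i - 1 then
      F (if k - 2 * (s + 1) = -2 * N then 2 * N else k - 2 * (s + 1)) else 0 := by
  induction s with
  | zero => intro F k; rw [zero_add, pow_one, rBA]; simp
  | succ s ih =>
    intro F k
    have z : ((rB K m N i j * rA K m N i j) ^ (s + 1)) F (2 * N) = 0 := by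
      rw [ih, if_neg (by omega), if_neg]
      rintro ⟨h1, h2, h3, h4⟩
      omega
    have e1 : k + 2 + 2 * ((s : ℤ) + 1) = k + 2 * ((s : ℤ) + 1 + 1) := by ring
    have e2 : k - 2 - 2 * ((s : ℤ) + 1) = k - 2 * ((s : ℤ) + 1 + 1) := by ring
    rw [pow_succ', Module.End.mul_apply, rBA]
    by_cases h : k - 2 = -2 * N
    · rw [if_pos h, z]
      simp only [ih]
      push_cast
      rw [e1]
      split_ifs <;> first | rfl | (exfalso; grind)
    · rw [if_neg h]
      simp only [ih]
      push_cast
      rw [e1, e2]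
      split_ifs <;> first | rfl | (exfalso; grind)

theorem rcomm (hN : 1 ≤ N) (i j : ZMod m) : (rA K m N i j * rB K m N i j) ^ N =
    (rB K m N i (j-1) * rA K m N i (j-1)) ^ N := by
  obtain ⟨M, hM⟩ : ∃ M, N = M + 1 := ⟨N - 1, by omega⟩
  have h1 := rAB_pow K m N i j M
  have h2 := rBA_pow K m N i (j-1) M
  rw [← hM] at h1 h2
  refine LinearMap.ext fun F => funext fun k => ?_
  rw [h1, h2]
  have : (j - 1 = i - 1) ↔ j = i := by grind
  simp only [this]
  by_cases hk : k = 0 ∧ j = i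
  · obtain ⟨rfl, rfl⟩ := hk
    have : (2 * (M + 1) : ℤ) = 2 * N := by rw [hM]; push_cast; ring
    rw [this]
    rw [if_pos ⟨by omega, by omega, by omega, rfl⟩, if_neg (by omega),
      if_pos ⟨by omega, by omega, by omega, rfl⟩, if_pos (by omega)]
    simp
  · rw [if_neg (by grind), if_neg (by grind), if_neg (by grind), if_neg (by grind)]

/-- generators -/
noncomputable def rG (i : ZMod m) : Gen m → Module.End K (ℤ → K)
  | .e j => rE K m i j
  | .a j => rA K m N i j
  | .abar j => rB K m N i j

noncomputable def rep (hN : 1 ≤ N) (i : ZMod m) : Lam K m N →ₐ[K] Module.End K (ℤ → K) :=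
  RingQuot.liftAlgHom K ⟨FreeAlgebra.lift K (rG K m N i), by
    intro x y h
    cases h with
    | idem j =>
      simp only [Efree, map_mul, FreeAlgebra.lift_ι_apply, rG]
      refine LinearMap.ext fun F => funext fun k => ?_
      simp only [Module.End.mul_apply, rE_app]; grind
    | orth j l h =>
      simp only [Efree, map_mul, FreeAlgebra.lift_ι_apply, rG, map_zero]
      refine LinearMap.ext fun F => funext fun k => ?_
      simp only [Module.End.mul_apply, rE_app, LinearMap.zero_apply, Pi.zero_apply]; grind
    | sum_e =>
      simp only [Efree, map_sum, FreeAlgebra.lift_ι_apply, rG, map_one]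
      refine LinearMap.ext fun F => funext fun k => ?_
      simp [rE_app, LinearMap.sum_apply, Finset.sum_apply]
    | src_a j =>
      simp only [Efree, Afree, map_mul, FreeAlgebra.lift_ι_apply, rG]
      refine LinearMap.ext fun F => funext fun k => ?_
      simp only [Module.End.mul_apply, rE_app, rA_app, vb]; grind
    | tgt_a j =>
      simp only [Efree, Afree, map_mul, FreeAlgebra.lift_ι_apply, rG]
      refine LinearMap.ext fun F => funext fun k => ?_
      simp only [Module.End.mul_apply, rE_app, rA_app, vb]; grind
    | src_ab j =>
      simp only [Efree, ABfree, map_mul, FreeAlgebra.lift_ι_apply, rG]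
      refine LinearMap.ext fun F => funext fun k => ?_
      simp only [Module.End.mul_apply, rE_app, rB_app, vb]; grind
    | tgt_ab j =>
      simp only [Efree, ABfree, map_mul, FreeAlgebra.lift_ι_apply, rG]
      refine LinearMap.ext fun F => funext fun k => ?_
      simp only [Module.End.mul_apply, rE_app, rB_app, vb]; grind
    | zero_aa j =>
      simp only [Afree, map_mul, FreeAlgebra.lift_ι_apply, rG, map_zero]
      refine LinearMap.ext fun F => funext fun k => ?_
      simp only [Module.End.mul_apply, rA_app, LinearMap.zero_apply, Pi.zero_apply]; grind
    | zero_abab j =>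
      simp only [ABfree, map_mul, FreeAlgebra.lift_ι_apply, rG, map_zero]
      refine LinearMap.ext fun F => funext fun k => ?_
      simp only [Module.End.mul_apply, rB_app, LinearMap.zero_apply, Pi.zero_apply]; grind
    | comm j =>
      simp only [Afree, ABfree, map_mul, map_pow, FreeAlgebra.lift_ι_apply, rG]
      exact rcomm K m N hN i j⟩

theorem rep_e (hN : 1 ≤ N) (i j : ZMod m) : rep K m N hN i (e K m N j) = rE K m i j := by
  simp [rep, e, Efree, rG]
theorem rep_a (hN : 1 ≤ N) (i j : ZMod m) : rep K m N hN i (a K m N j) = rA K m N i j := by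
  simp [rep, a, Afree, rG]
theorem rep_ab (hN : 1 ≤ N) (i j : ZMod m) : rep K m N hN i (ab K m N j) = rB K m N i j := by
  simp [rep, ab, ABfree, rG]

theorem rep_P (hN : 1 ≤ N) (i : ZMod m) (n : ℕ) : ∀ (_ : n ≤ 2 * N) (F : ℤ → K),
    rep K m N hN i (P K m N i n) F 0 = F n := by
  induction n with
  | zero => intro _ F; rw [P, rep_e, rE_app]; simp [vb]
  | succ n ih =>
    intro h F
    rw [P, map_mul, Module.End.mul_apply, ih (by omega)]
    split_ifs with h0
    · rw [rep_a, rA_app, if_pos ⟨by omega, by omega, by omega, rfl⟩]; simp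
    · rw [rep_ab, rB_app, if_pos ⟨by omega, by omega, by omega, rfl⟩]; simp
theorem rep_Q (hN : 1 ≤ N) (i : ZMod m) (n : ℕ) : ∀ (_ : n < 2 * N) (F : ℤ → K),
    rep K m N hN i (Q K m N i n) F 0 = F (-n) := by
  induction n with
  | zero => intro _ F; rw [Q, rep_e, rE_app]; simp [vb]
  | succ n ih =>
    intro h F
    rw [Q, map_mul, Module.End.mul_apply, ih (by omega)]
    have e1 : (-(n : ℤ) - 1) = -((n + 1 : ℕ) : ℤ) := by omega
    split_ifs with h0
    · rw [rep_ab, rB_app, if_neg (by omega), if_pos ⟨by omega, by omega, by omega, rfl⟩, e1]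
    · rw [rep_a, rA_app, if_neg (by omega), if_pos ⟨by omega, by omega, by omega, rfl⟩, if_neg (by omega), e1]

theorem rep_bas (hN : 1 ≤ N) (i : ZMod m) (k : ℤ) (hk : k ∈ Set.Ioc (-2 * N : ℤ) (2 * N))
    (F : ℤ → K) : rep K m N hN i (bas K m N i k) F 0 = F k := by
  obtain ⟨h1, h2⟩ := hk
  unfold bas
  split_ifs with h
  · rw [rep_P K m N hN i _ (by omega)]; congr 1; omega
  · rw [rep_Q K m N hN i _ (by omega)]; congr 1; omega

theorem bas_indep (hN : 1 ≤ N) (i : ZMod m) (S : Set ℤ) (hS : S ⊆ Set.Ioc (-2 * N : ℤ) (2 * N)) :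
    LinearIndependent K (fun k : S => bas K m N i k) := by
  let Φ : Lam K m N →ₗ[K] (S → K) :=
    { toFun := fun x l => rep K m N hN i x (Pi.single (l : ℤ) 1) 0
      map_add' := by intro x y; funext l; simp
      map_smul' := by intro x y; funext l; simp }
  apply LinearIndependent.of_comp Φ
  have : (Φ ∘ fun k : S => bas K m N i k) = fun k : S => Pi.single k (1 : K) := by
    funext k l
    change rep K m N hN i (bas K m N i k) (Pi.single (l : ℤ) 1) 0 = _
    rw [rep_bas K m N hN i k (hS k.2)]
    simp only [Pi.single_apply, Subtype.ext_iff, eq_comm]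
  rw [this]
  exact Pi.linearIndependent_single_one S K

theorem corner_rank (hN : 1 ≤ N) (i j : ZMod m) : Module.Finite K (corner K m N i j) ∧ Module.Free K (corner K m N i j) ∧
    Module.finrank K (corner K m N i j)
      = ((Finset.Ioc (-2 * N : ℤ) (2 * N)).filter (fun k => vb m i k = j)).card := by
  have hS : {k | k ∈ Set.Ioc (-2 * N : ℤ) (2 * N) ∧ vb m i k = j} =
    (((Finset.Ioc (-2 * N : ℤ) (2 * N)).filter (fun k => vb m i k = j) : Finset ℤ) : Set ℤ) := by
    ext k; simp
  rw [corner_eq K m N hN, hS]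
  set S := (Finset.Ioc (-2 * N : ℤ) (2 * N)).filter (fun k => vb m i k = j)
  have hi := bas_indep K m N hN i (S : Set ℤ) (by
    intro k hk
    have := (Finset.mem_filter.1 (Finset.mem_coe.1 hk)).1
    simpa using this)
  have := finrank_span_eq_card hi
  rw [Set.image_eq_range]
  refine ⟨?_, Module.Free.of_basis (Module.Basis.span hi), ?_⟩
  · exact FiniteDimensional.span_of_finite K (Set.finite_range _)
  · exact this.trans (by simp)

theorem card_even (N : ℕ) : ((Finset.Ioc (-2 * N : ℤ) (2 * N)).filter (fun k => k % 2 = 0)).card = 2 * N := by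
  rw [← Int.card_Ioc (-N) N |>.trans (by omega : _ = 2 * N)]
  symm
  apply Finset.card_bij (fun k _ => 2 * k)
  · intro k hk; simp at hk ⊢; omega
  · intro x _ y _ h; simpa using h
  · intro k hk; simp at hk; exact ⟨k / 2, by simp; omega, by omega⟩
theorem card_pos (N : ℕ) : ((Finset.Ioc (-2 * N : ℤ) (2 * N)).filter (fun k => k % 2 ≠ 0 ∧ 0 < k)).card = N := by
  conv_rhs => rw [← Finset.card_range N]
  symm
  apply Finset.card_bij (fun (k : ℕ) _ => 2 * (k : ℤ) + 1)
  · intro k hk; simp at hk ⊢; omega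
  · intro x _ y _ h; simpa using h
  · intro k hk; simp at hk; exact ⟨(k / 2).toNat, by simp; omega, by omega⟩
theorem card_neg (N : ℕ) : ((Finset.Ioc (-2 * N : ℤ) (2 * N)).filter (fun k => k % 2 ≠ 0 ∧ ¬ 0 < k)).card = N := by
  conv_rhs => rw [← Finset.card_range N]
  symm
  apply Finset.card_bij (fun (k : ℕ) _ => -(2 * (k : ℤ) + 1))
  · intro k hk; simp at hk ⊢; omega
  · intro x _ y _ h; simpa using h
  · intro k hk; simp at hk; exact ⟨((-k) / 2).toNat, by simp; omega, by omega⟩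

theorem card_corner (hm : 3 ≤ m) (i d : ZMod m) :
    ((Finset.Ioc (-2 * N : ℤ) (2 * N)).filter (fun k => vb m i k = i + d)).card
     = N * ((if d = 0 then 2 else 0) + (if d = 1 then 1 else 0) + (if d = -1 then 1 else 0)) := by
  have c : ∀ k : ℤ, (vb m i k = i + d) ↔ ((k % 2 = 0 ∧ d = 0) ∨ ((k % 2 ≠ 0 ∧ 0 < k) ∧ d = 1)
      ∨ ((k % 2 ≠ 0 ∧ ¬ 0 < k) ∧ d = -1)) := by
    intro k; unfold vb
    split_ifs <;> grind
  have h1 : (1 : ZMod m) ≠ 0 := by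
    intro h
    have := (ZMod.natCast_eq_zero_iff 1 m).1 (by simpa using h)
    exact absurd (Nat.le_of_dvd (by omega) this) (by omega)
  have h2 : (1 : ZMod m) ≠ -1 := by
    intro h
    have := (ZMod.natCast_eq_zero_iff 2 m).1 (by push_cast; grind)
    exact absurd (Nat.le_of_dvd (by omega) this) (by omega)
  simp only [c]
  by_cases d0 : d = 0
  · subst d0
    simpa [h1, h1.symm, mul_comm] using card_even N
  by_cases d1 : d = 1
  · subst d1
    simpa [h1, h2] using card_pos N
  by_cases d2 : d = -1
  · subst d2
    simpa [h1, h2.symm] using card_neg N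
  simp [d0, d1, d2]
end rep
end Stmt10
namespace Stmt10
section hom
theorem Lsub_e {i : ZMod m} (x : Lsub K m N i) : (x : Lam K m N) * e K m N i = x := by
  obtain ⟨_, y, rfl⟩ := x; simp [mul_assoc, ee]
theorem Rsub_e {i : ZMod m} (x : Rsub K m N i) : e K m N i * (x : Lam K m N) = x := by
  obtain ⟨_, y, rfl⟩ := x; simp [← mul_assoc, ee]

def eL (i : ZMod m) : Lsub K m N i := ⟨e K m N i, 1, by simp⟩
def eR (i : ZMod m) : Rsub K m N i := ⟨e K m N i, 1, by simp⟩

abbrev tgt (n : ℕ) (σ : ZMod m × Fin (n + 1)) : ZMod m :=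
  σ.1 + (n : ZMod m) - 2 * ((σ.2 : ℕ) : ZMod m)

/-- generator of a summand -/
noncomputable def gen (n : ℕ) (σ : ZMod m × Fin (n + 1)) : Pmod K m N n :=
  Pi.single σ (eL K m N σ.1 ⊗ₜ[K] eR K m N (tgt m n σ))

theorem actP_single (n : ℕ) (σ : ZMod m × Fin (n + 1)) (cl cr : Lam K m N)
    (u : Lsub K m N σ.1) (v : Rsub K m N (tgt m n σ)) :
    actP K m N n cl cr (Pi.single σ (u ⊗ₜ[K] v)) =
      Pi.single σ (lact K m N _ cl u ⊗ₜ[K] ract K m N _ cr v) := by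
  funext τ
  by_cases h : τ = σ
  · subst h; simp [actP]
  · simp [actP, h]

theorem lact_e {i : ZMod m} (u : Lsub K m N i) : lact K m N i u (eL K m N i) = u :=
  Subtype.ext (Lsub_e K m N u)
theorem ract_e {i : ZMod m} (u : Rsub K m N i) : ract K m N i u (eR K m N i) = u :=
  Subtype.ext (Rsub_e K m N u)
theorem lact_ee {i : ZMod m} : lact K m N i (e K m N i) (eL K m N i) = eL K m N i :=
  Subtype.ext (ee K m N i)
theorem ract_ee {i : ZMod m} : ract K m N i (e K m N i) (eR K m N i) = eR K m N i :=
  Subtype.ext (ee K m N i)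

/-- bilinear map -/
noncomputable def bil (i j : ZMod m) (c : Lam K m N) :
    (Lsub K m N i) ⊗[K] (Rsub K m N j) →ₗ[K] Lam K m N :=
  TensorProduct.lift (((LinearMap.mul K (Lam K m N)).comp
    ((LinearMap.mulRight K c).comp (Lsub K m N i).subtype)).compl₂ (Rsub K m N j).subtype)

theorem bil_tmul (i j : ZMod m) (c : Lam K m N) (u : Lsub K m N i) (v : Rsub K m N j) :
    bil K m N i j c (u ⊗ₜ v) = u * c * v := by simp [bil]

theorem bil_act (i j : ZMod m) (c cl cr : Lam K m N) (x : (Lsub K m N i) ⊗[K] (Rsub K m N j)) :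
    bil K m N i j c (TensorProduct.map (lact K m N i cl) (ract K m N j cr) x)
      = cl * bil K m N i j c x * cr := by
  induction x using TensorProduct.induction_on with
  | zero => simp
  | add x y hx hy => simp only [map_add, hx, hy, mul_add, add_mul]
  | tmul u v =>
    rw [TensorProduct.map_tmul, bil_tmul, bil_tmul]
    change (cl * (u : Lam K m N)) * c * ((v : Lam K m N) * cr) = _
    simp only [mul_assoc]

noncomputable def homMap (n : ℕ) : HomSpace K m N n →ₗ[K]
    ((σ : ZMod m × Fin (n + 1)) → corner K m N σ.1 (tgt m n σ)) where
  toFun f σ := ⟨f.1 (gen K m N n σ), by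
    rw [mem_corner, ← f.2, gen, actP_single, lact_ee, ract_ee]⟩
  map_add' f g := rfl
  map_smul' c f := rfl

theorem homMap_inj (n : ℕ) : Function.Injective (homMap K m N n) := by
  intro f g hf
  apply Subtype.ext
  apply LinearMap.pi_ext'
  intro σ
  apply TensorProduct.ext'
  intro u v
  have h := f.2 u v (gen K m N n σ)
  have h' := g.2 u v (gen K m N n σ)
  have h0 : f.1 (gen K m N n σ) = g.1 (gen K m N n σ) := congrArg Subtype.val (congrFun hf σ)
  rw [h0, ← h', gen, actP_single, lact_e, ract_e] at h
  exact h

noncomputable def hsum (n : ℕ) (c : ZMod m × Fin (n + 1) → Lam K m N) :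
    Pmod K m N n →ₗ[K] Lam K m N :=
  ∑ σ : ZMod m × Fin (n + 1), (bil K m N σ.1 (tgt m n σ) (c σ)).comp
    (LinearMap.proj (R := K) (φ := fun σ : ZMod m × Fin (n + 1) =>
      (Lsub K m N σ.1) ⊗[K] (Rsub K m N (tgt m n σ))) σ)

theorem hsum_apply (n : ℕ) (c : ZMod m × Fin (n + 1) → Lam K m N) (x : Pmod K m N n) :
    hsum K m N n c x = ∑ σ : ZMod m × Fin (n + 1), bil K m N σ.1 (tgt m n σ) (c σ) (x σ) := by
  rw [hsum, LinearMap.sum_apply]; rfl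

theorem hsum_mem (n : ℕ) (c : ZMod m × Fin (n + 1) → Lam K m N) :
    hsum K m N n c ∈ HomSpace K m N n := by
  intro cl cr x
  rw [hsum_apply, hsum_apply, Finset.mul_sum, Finset.sum_mul]
  exact Finset.sum_congr rfl fun σ _ => bil_act K m N _ _ _ _ _ _

theorem homMap_surj (n : ℕ) : Function.Surjective (homMap K m N n) := by
  intro c
  refine ⟨⟨hsum K m N n fun σ => (c σ : Lam K m N), hsum_mem K m N n _⟩, ?_⟩
  funext σ
  apply Subtype.ext
  change hsum K m N n (fun σ => (c σ : Lam K m N)) (gen K m N n σ) = _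
  rw [hsum_apply, Finset.sum_eq_single σ]
  · rw [gen, Pi.single_eq_same, bil_tmul]
    exact (mem_corner K m N).1 (c σ).2
  · intro τ _ h
    rw [gen, Pi.single_eq_of_ne h, map_zero]
  · simp
end hom
end Stmt10

theorem stmt10 (hm : 3 ≤ m) (hN : 1 ≤ N) (p t : ℕ) (ht : t < m) :
    Module.finrank K (HomSpace K m N (p * m + t)) =
      if t = m - 1 then (4 * p + 4) * m * N else (4 * p + 2) * m * N := by
  have hc := Stmt10.count_main m p t hm ht _ rfl
  generalize p * m + t = n at hc ⊢
  rw [(LinearEquiv.ofBijective (Stmt10.homMap K m N n)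
    ⟨Stmt10.homMap_inj K m N n, Stmt10.homMap_surj K m N n⟩).finrank_eq]
  have := fun i j => (Stmt10.corner_rank K m N hN i j).1
  have := fun i j => (Stmt10.corner_rank K m N hN i j).2.1
  rw [Module.finrank_pi_fintype]
  have key : ∀ σ : ZMod m × Fin (n + 1),
      Module.finrank K (Stmt10.corner K m N σ.1 (Stmt10.tgt m n σ)) =
      N * ((if (n : ZMod m) - 2 * ((σ.2 : ℕ) : ZMod m) = 0 then 2 else 0)
      + (if (n : ZMod m) - 2 * ((σ.2 : ℕ) : ZMod m) = 1 then 1 else 0)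
      + (if (n : ZMod m) - 2 * ((σ.2 : ℕ) : ZMod m) = -1 then 1 else 0)) := by
    intro σ
    rw [(Stmt10.corner_rank K m N hN _ _).2.2, ← Stmt10.card_corner m N hm σ.1, Stmt10.tgt,
      add_sub_assoc]
  rw [Fintype.sum_prod_type]
  have key2 : ∀ i : ZMod m, ∑ r : Fin (n + 1),
      Module.finrank K (Stmt10.corner K m N (i, r).1 (Stmt10.tgt m n (i, r))) =
      N * (2 * if t = m - 1 then 2 * p + 2 else 2 * p + 1) := by
    intro i
    rw [← hc, Finset.sum_range, Finset.mul_sum]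
    exact Finset.sum_congr rfl fun r _ => key (i, r)
  rw [Finset.sum_congr rfl fun i _ => key2 i, Finset.sum_const]
  simp only [Finset.card_univ, ZMod.card, smul_eq_mul]
  split_ifs <;> ring
end
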